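/- arXiv:1701.04633 — 4 statements merged into one kernel-verified Lean document; each statement's English description precedes it below -/
import Mathlib

section
/- Fix d ≥ 2. Let c_n^{(d)} be the number of subgroups Λ ⊆ ℤ^d of index n such that Λ = ρ_f(I) for some monic polynomial f ∈ ℤ[X] of degree d and some ideal I ⊆ ℤ[X]/(f), where ρ_f is the coordinate isomorphism ℤ[X]/(f) → ℤ^d with respect to the basis 1, X, …, X^{d-1}. Then lim_{N→∞} N^{-2} Σ_{n≤N} c_n^{(d)} = (1/2)·(∏_{i=2}^{d-1} ζ(i))·ζ(2d), where ζ is the Riemann zeta function (the product being empty, hence 1, when d = 2). -/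
/-!
Identify `ℤ^d` with the polynomials of degree `< d`. An ideal lattice in `ℤ^d` is then the set
`J_{<d}` of elements of degree `< d` of an ideal `J ⊆ ℤ[X]` containing a monic polynomial of
degree `d`, and its index is `[ℤ[X] : J]`. Let `𝓘_k` be the set of ideals of finite index in
`ℤ[X]` which contain a monic polynomial of degree `k`.

*Structure of ideal lattices.* If `J` has finite index and `a > 0` generates the coefficients of
`X^k` in `J_{<k+1}`, then `a` divides every element of `J_{<k+1}` (`exists_content`, by induction
on `k`). Hence `J_{<k+1} = a • (J₀)_{<k+1}` with the colon ideal `J₀ = (J : a) ∈ 𝓘_k`, and the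
ideal lattices of finite index in `ℤ^{k+1}` correspond bijectively to the pairs `(a, J₀)` with
`a ≥ 1` and `J₀ ∈ 𝓘_k` (`exists_scaledLat`, `isIdealLattice_scaledLat`, `scaledLat_injective`),
the index being `a^{k+1} [ℤ[X] : J₀]`.

*Counting ideals.* Put `M = (J₀)_{<k+1}`. The ideals `J ∈ 𝓘_{k+1}` with `J_{<k+1} = a • M` are
the `a J₀ + (X h + m)`, where `h ∈ J₀` is a fixed monic polynomial of degree `k` and `m` runs
through `M / a M`; there are `a^{k+1}` of them (`card_fibre`). So the number `S_k(N)` of ideals in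
`𝓘_k` of index at most `N` satisfies `S_{k+1}(N) = ∑_a a^{k+1} S_k(N / a^{k+1})`, while the number
of ideal lattices in `ℤ^{k+1}` of index at most `N` is `∑_a S_k(N / a^{k+1})`.

*Asymptotics.* `S_1(N) = N (N + 1) / 2`. If `S(N) / N² → L`, dominated convergence gives
`N⁻² ∑_a w(a) S(N / a^k) → L ∑_a w(a) a^{-2k}` (`tendsto_weighted_sum`). With `w(a) = a^k` this
contributes the factors `ζ(k)`, `2 ≤ k < d`, and in the last step, with `w = 1`, the factor
`ζ(2d)`.
-/
open Polynomial Filter Topology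

/-- A subgroup `Λ ⊆ ℤ^d` is an ideal lattice if it is the image, under the coordinate
isomorphism with respect to the basis `1, X, …, X^{d-1}`, of an ideal of `ℤ[X]/(f)` for
some monic `f` of degree `d`. -/
def IsIdealLattice (d : ℕ) (Λ : AddSubgroup (Fin d → ℤ)) : Prop :=
  ∃ f : Polynomial ℤ, f.Monic ∧ f.natDegree = d ∧
    ∃ I : Ideal (Polynomial ℤ ⧸ Ideal.span {f}),
      ∀ v : Fin d → ℤ, v ∈ Λ ↔
        Ideal.Quotient.mk (Ideal.span {f}) (∑ i : Fin d, C (v i) * X ^ (i : ℕ)) ∈ I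

/-! ### Ideal lattices as truncations of ideals of `ℤ[X]` -/

/-- The ideal `J` contains a monic polynomial of degree exactly `k`. -/
abbrev HasMonic (k : ℕ) (J : Ideal ℤ[X]) : Prop := ∃ h ∈ J, h.Monic ∧ h.natDegree = k

/-- The inverse of the coordinate isomorphism: the vector `v` goes to `∑ i, v i * X ^ i`. -/
noncomputable def coordHom (d : ℕ) : (Fin d → ℤ) →+ ℤ[X] where
  toFun v := ∑ i : Fin d, C (v i) * X ^ (i : ℕ)
  map_zero' := by simp
  map_add' v w := by simp [add_mul, Finset.sum_add_distrib]

theorem coordHom_apply (d : ℕ) (v : Fin d → ℤ) :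
    coordHom d v = ∑ i : Fin d, C (v i) * X ^ (i : ℕ) := rfl

theorem coeff_coordHom (d : ℕ) (v : Fin d → ℤ) (i : Fin d) : (coordHom d v).coeff i = v i := by
  simp [coordHom_apply, finsetSum_coeff, coeff_X_pow, Fin.val_inj]

theorem coordHom_injective (d : ℕ) : Function.Injective (coordHom d) := by
  intro v w h
  ext i
  rw [← coeff_coordHom d v, h, coeff_coordHom]

theorem degree_coordHom_lt (d : ℕ) (v : Fin d → ℤ) : (coordHom d v).degree < d := by
  rw [← mem_degreeLT]
  rw [coordHom_apply]
  refine Submodule.sum_mem _ fun i _ => ?_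
  rw [mem_degreeLT]
  refine (degree_C_mul_X_pow_le _ _).trans_lt ?_
  exact_mod_cast i.2

theorem exists_coordHom_eq (d : ℕ) (p : ℤ[X]) (hp : p.degree < d) : ∃ v, coordHom d v = p := by
  refine ⟨fun i => p.coeff i, ?_⟩
  ext n
  by_cases hn : n < d
  · exact coeff_coordHom d _ ⟨n, hn⟩
  · have : (d : WithBot ℕ) ≤ n := by exact_mod_cast not_lt.1 hn
    rw [coeff_eq_zero_of_degree_lt (hp.trans_le this),
      coeff_eq_zero_of_degree_lt ((degree_coordHom_lt d _).trans_le this)]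

/-- The lattice `J_{<d} ⊆ ℤ^d` of coordinate vectors of the elements of `J` of degree `< d`. -/
noncomputable def lat (d : ℕ) (J : Ideal ℤ[X]) : AddSubgroup (Fin d → ℤ) := J.toAddSubgroup.comap (coordHom d)

theorem mem_lat {d : ℕ} {J : Ideal ℤ[X]} {v : Fin d → ℤ} : v ∈ lat d J ↔ coordHom d v ∈ J :=
  Iff.rfl

/-- The lattice `a • J_{<d}`. -/
noncomputable def scaledLat (a d : ℕ) (J : Ideal ℤ[X]) : AddSubgroup (Fin d → ℤ) :=
  (lat d J).map (nsmulAddMonoidHom a)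

theorem mem_scaledLat {a d : ℕ} {J : Ideal ℤ[X]} {v : Fin d → ℤ} :
    v ∈ scaledLat a d J ↔ ∃ w, coordHom d w ∈ J ∧ a • w = v := Iff.rfl

theorem isIdealLattice_iff (d : ℕ) (Λ : AddSubgroup (Fin d → ℤ)) :
    IsIdealLattice d Λ ↔ ∃ J, HasMonic d J ∧ Λ = lat d J := by
  constructor
  · rintro ⟨f, hf, hd, I, hI⟩
    refine ⟨I.comap (Ideal.Quotient.mk _), ⟨f, ?_, hf, hd⟩, ?_⟩
    · rw [Ideal.mem_comap, Ideal.Quotient.eq_zero_iff_mem.2 (Ideal.mem_span_singleton_self f)]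
      exact I.zero_mem
    · ext v
      exact hI v
  · rintro ⟨J, ⟨f, hfJ, hf, hd⟩, rfl⟩
    refine ⟨f, hf, hd, J.map (Ideal.Quotient.mk _), fun v => ?_⟩
    rw [mem_lat, ← coordHom_apply,
      ← Ideal.mem_comap (f := Ideal.Quotient.mk (Ideal.span {f})),
      Ideal.comap_map_of_surjective _ Ideal.Quotient.mk_surjective, ← RingHom.ker_eq_comap_bot,
      Ideal.mk_ker, sup_eq_left.2]
    rwa [Ideal.span_singleton_le_iff_mem]

/-- The index of `J` in `ℤ[X]`, with value `0` if it is infinite. -/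
noncomputable def idx (J : Ideal ℤ[X]) : ℕ := J.toAddSubgroup.index

/-- Division with remainder by a monic polynomial of degree `d`, the remainder being given by its
coordinate vector. -/
theorem exists_div {d : ℕ} {f : ℤ[X]} (hf : f.Monic) (hd : f.natDegree = d) (p : ℤ[X]) :
    ∃ v q, p = coordHom d v + q * f := by
  obtain ⟨v, hv⟩ := exists_coordHom_eq d (p %ₘ f) (by
    rw [← hd, ← degree_eq_natDegree hf.ne_zero]; exact degree_modByMonic_lt p hf)
  exact ⟨v, p /ₘ f, by rw [hv, mul_comm, modByMonic_add_div]⟩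

/-- A monic element of degree `d` in `J` makes `ℤ^d → ℤ[X] / J` surjective. -/
theorem index_lat {d : ℕ} {J : Ideal ℤ[X]} (h : HasMonic d J) : (lat d J).index = idx J := by
  obtain ⟨f, hfJ, hf, hd⟩ := h
  have hs : Function.Surjective ((QuotientAddGroup.mk' J.toAddSubgroup).comp (coordHom d)) := by
    intro x
    obtain ⟨p, rfl⟩ := QuotientAddGroup.mk'_surjective _ x
    obtain ⟨v, q, rfl⟩ := exists_div hf hd p
    refine ⟨v, ?_⟩
    have hmem : -coordHom d v + (coordHom d v + q * f) ∈ J.toAddSubgroup := by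
      simpa using J.mul_mem_left q hfJ
    exact QuotientAddGroup.eq.2 hmem
  have := AddSubgroup.index_comap_of_surjective (⊥ : AddSubgroup (ℤ[X] ⧸ J.toAddSubgroup)) hs
  rw [AddSubgroup.index_bot] at this
  change (lat d J).index = Nat.card (ℤ[X] ⧸ J.toAddSubgroup)
  rw [← this]
  congr 1
  ext v
  rw [mem_lat, AddSubgroup.mem_comap, AddSubgroup.mem_bot]
  exact (QuotientAddGroup.eq_zero_iff (N := J.toAddSubgroup) (coordHom d v)).symm

theorem index_scaledLat {a d : ℕ} (ha : 1 ≤ a) {J : Ideal ℤ[X]} :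
    (scaledLat a d J).index = a ^ d * (lat d J).index := by
  have hinj : Function.Injective (nsmulAddMonoidHom a : (Fin d → ℤ) →+ (Fin d → ℤ)) := by
    intro v w h
    ext i
    have := congrFun h i
    simp at this
    omega
  rw [scaledLat, AddSubgroup.index_map_of_injective _ hinj, mul_comm]
  congr 1
  -- `a ℤ^d` is the kernel of the reduction `ℤ^d → (ℤ/a)^d`.
  let ψ : (Fin d → ℤ) →+ (Fin d → ZMod a) :=
    { toFun := fun v i => (v i : ZMod a)
      map_zero' := by ext; simp
      map_add' := by intros; ext; simp }
  have hψ : Function.Surjective ψ := fun x => by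
    choose v hv using fun i => ZMod.intCast_surjective (x i)
    exact ⟨v, funext hv⟩
  have hk : (nsmulAddMonoidHom a : (Fin d → ℤ) →+ (Fin d → ℤ)).range = ψ.ker := by
    ext v
    rw [AddMonoidHom.mem_range, AddMonoidHom.mem_ker]
    constructor
    · rintro ⟨w, rfl⟩
      ext i
      simp [ψ]
    · intro h
      have h' : ∀ i, ∃ c, v i = a * c := fun i => by
        have := congrFun h i
        exact (ZMod.intCast_zmod_eq_zero_iff_dvd _ _).1 this
      choose w hw using h'
      exact ⟨w, by ext i; simp [hw]⟩
  rw [hk, AddSubgroup.index_ker, AddMonoidHom.range_eq_top.2 hψ]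
  simp [Nat.card_pi]

theorem smul_coordHom (a d : ℕ) (w : Fin d → ℤ) :
    coordHom d (a • w) = C (a : ℤ) * coordHom d w := by
  rw [map_nsmul, nsmul_eq_mul]; simp

/-! ### The ideals `a J + (f)` -/

/-- The ideal `a J + (f)` of `ℤ[X]`. -/
noncomputable def thicken (a : ℕ) (J : Ideal ℤ[X]) (f : ℤ[X]) : Ideal ℤ[X] :=
  Ideal.span {C (a : ℤ)} * J ⊔ Ideal.span {f}

theorem mem_thicken {a : ℕ} {J : Ideal ℤ[X]} {f p : ℤ[X]} :
    p ∈ thicken a J f ↔ ∃ j ∈ J, ∃ q, p = C (a : ℤ) * j + q * f := by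
  simp only [thicken, Submodule.mem_sup, Ideal.mem_span_singleton_mul, Ideal.mem_span_singleton']
  constructor
  · rintro ⟨_, ⟨j, hj, rfl⟩, _, ⟨q, rfl⟩, rfl⟩
    exact ⟨j, hj, q, rfl⟩
  · rintro ⟨j, hj, q, rfl⟩
    exact ⟨_, ⟨j, hj, rfl⟩, _, ⟨q, rfl⟩, rfl⟩

theorem self_mem_thicken (a : ℕ) (J : Ideal ℤ[X]) (f : ℤ[X]) : f ∈ thicken a J f :=
  mem_thicken.2 ⟨0, J.zero_mem, 1, by simp⟩

/-- If a multiple of a monic polynomial of degree `d` has degree `< d`, it vanishes. -/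
theorem mul_monic_eq_zero {d : ℕ} {f q : ℤ[X]} (hf : f.Monic) (hd : f.natDegree = d)
    (h : (q * f).degree < d) : q = 0 := by
  by_contra hq
  rw [hf.degree_mul, degree_eq_natDegree hf.ne_zero, hd, degree_eq_natDegree hq] at h
  norm_cast at h
  omega

/-- If `f ∈ J` is monic of degree `d`, then adjoining `f` to `a J` creates no new elements of degree
`< d`: any such element of `a J + (f)` is its own remainder modulo `f`. -/
theorem lat_thicken {a d : ℕ} {J : Ideal ℤ[X]} {f : ℤ[X]} (hfJ : f ∈ J) (hf : f.Monic)
    (hd : f.natDegree = d) : lat d (thicken a J f) = scaledLat a d J := by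
  ext v
  rw [mem_lat, mem_scaledLat, mem_thicken]
  constructor
  · rintro ⟨j, hj, q, h⟩
    obtain ⟨w, q', rfl⟩ := exists_div hf hd j
    have hw : coordHom d w ∈ J := by
      have := J.sub_mem hj (J.mul_mem_left q' hfJ)
      simpa using this
    have h1 : coordHom d (v - a • w) = (C (a : ℤ) * q' + q) * f := by
      rw [map_sub, smul_coordHom, h]; ring
    have h2 := mul_monic_eq_zero hf hd (h1 ▸ degree_coordHom_lt d _)
    rw [h2, zero_mul] at h1
    have h3 := coordHom_injective d (h1.trans (map_zero _).symm)
    exact ⟨w, hw, (sub_eq_zero.1 h3).symm⟩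
  · rintro ⟨w, hw, rfl⟩
    exact ⟨_, hw, 0, by rw [smul_coordHom]; ring⟩

theorem monic_X_mul_add {k : ℕ} {h : ℤ[X]} (hh : h.Monic) (hk : h.natDegree = k)
    (v : Fin (k + 1) → ℤ) :
    (X * h + coordHom (k + 1) v).Monic ∧ (X * h + coordHom (k + 1) v).natDegree = k + 1 := by
  have h1 : (X * h).Monic := monic_X.mul hh
  have h2 : (X * h).natDegree = k + 1 := by
    rw [monic_X.natDegree_mul hh, natDegree_X, hk, add_comm]
  have h3 : (coordHom (k + 1) v).degree < (X * h).degree := by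
    rw [degree_eq_natDegree h1.ne_zero, h2]; exact degree_coordHom_lt _ _
  exact ⟨h1.add_of_left h3, by rw [natDegree_add_eq_left_of_degree_lt h3, h2]⟩

theorem isIdealLattice_scaledLat {a k : ℕ} {J : Ideal ℤ[X]} (hJ : HasMonic k J) :
    IsIdealLattice (k + 1) (scaledLat a (k + 1) J) := by
  obtain ⟨h, hhJ, hh, hk⟩ := hJ
  obtain ⟨h1, h2⟩ := monic_X_mul_add hh hk 0
  rw [map_zero, add_zero] at h1 h2
  refine (isIdealLattice_iff _ _).2 ⟨thicken a J (X * h), ⟨_, self_mem_thicken _ _ _, h1, h2⟩, ?_⟩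
  rw [lat_thicken (J.mul_mem_left _ hhJ) h1 h2]

theorem HasMonic.succ {k : ℕ} {J : Ideal ℤ[X]} (hJ : HasMonic k J) : HasMonic (k + 1) J := by
  obtain ⟨h, hhJ, hh, hk⟩ := hJ
  obtain ⟨h1, h2⟩ := monic_X_mul_add hh hk 0
  rw [map_zero, add_zero] at h1 h2
  exact ⟨_, J.mul_mem_left _ hhJ, h1, h2⟩

/-- An ideal containing a monic polynomial of degree `k` is determined by its elements
of degree `≤ k`. -/
theorem le_of_lat_le {k : ℕ} {J J' : Ideal ℤ[X]} (hJ : HasMonic k J)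
    (h : lat (k + 1) J ≤ lat (k + 1) J') : J ≤ J' := by
  have key : ∀ p ∈ J, p.degree < (k + 1 : ℕ) → p ∈ J' := fun p hp hd => by
    obtain ⟨v, rfl⟩ := exists_coordHom_eq _ _ hd
    exact h hp
  obtain ⟨f, hfJ, hf, hk⟩ := hJ
  have hfd : f.degree < (k + 1 : ℕ) := by
    rw [degree_eq_natDegree hf.ne_zero, hk]; exact_mod_cast Nat.lt_succ_self k
  intro p hp
  obtain ⟨v, q, rfl⟩ := exists_div hf hk p
  have hv : coordHom k v ∈ J := by
    simpa using J.sub_mem hp (J.mul_mem_left q hfJ)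
  refine J'.add_mem (key _ hv ((degree_coordHom_lt k v).trans ?_))
    (J'.mul_mem_left _ (key f hfJ hfd))
  exact_mod_cast Nat.lt_succ_self k

/-- The scale `a` is the positive generator of the last coordinates of `a • J_{<k+1}`. -/
theorem scale_dvd {k a b : ℕ} {J J' : Ideal ℤ[X]} (hJ : HasMonic k J)
    (h : scaledLat a (k + 1) J ≤ scaledLat b (k + 1) J') : b ∣ a := by
  obtain ⟨f, hfJ, hf, hk⟩ := hJ
  have hfd : f.degree < (k + 1 : ℕ) := by
    rw [degree_eq_natDegree hf.ne_zero, hk]; exact_mod_cast Nat.lt_succ_self k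
  obtain ⟨v, rfl⟩ := exists_coordHom_eq _ _ hfd
  have hv : v (Fin.last k) = 1 := by
    rw [← coeff_coordHom (k + 1) v, Fin.val_last]
    have := hf.coeff_natDegree
    rwa [hk] at this
  obtain ⟨w, -, hw⟩ := h (mem_scaledLat.2 ⟨v, hfJ, rfl⟩)
  have := congrFun hw (Fin.last k)
  simp [hv] at this
  exact_mod_cast (Dvd.intro _ this)

theorem scaledLat_injective {k a b : ℕ} (ha : 1 ≤ a) {J J' : Ideal ℤ[X]} (hJ : HasMonic k J)
    (hJ' : HasMonic k J') (h : scaledLat a (k + 1) J = scaledLat b (k + 1) J') :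
    a = b ∧ J = J' := by
  obtain rfl : a = b := Nat.dvd_antisymm (scale_dvd hJ' h.ge) (scale_dvd hJ h.le)
  have key : ∀ I I' : Ideal ℤ[X], scaledLat a (k + 1) I = scaledLat a (k + 1) I' →
      lat (k + 1) I ≤ lat (k + 1) I' := fun I I' hI v hv => by
    obtain ⟨w, hw, hwv⟩ := hI.le (mem_scaledLat.2 ⟨v, hv, rfl⟩)
    obtain rfl : w = v := by
      ext i
      have := congrFun hwv i
      simp at this
      omega
    exact hw
  exact ⟨rfl, le_antisymm (le_of_lat_le hJ (key _ _ h)) (le_of_lat_le hJ' (key _ _ h.symm))⟩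

/-! ### Every ideal lattice of finite index is a scaled truncation -/

/-- The coefficients of `X ^ i` in the elements of `J` of degree `≤ i` form an ideal of `ℤ`; if it is
nonzero, it has a positive generator. -/
theorem exists_leading_generator (J : Ideal ℤ[X]) (i : ℕ) {g₀ : ℤ[X]} (h₀ : g₀ ∈ J)
    (hd : g₀.natDegree ≤ i) (hc : g₀.coeff i ≠ 0) :
    ∃ b : ℕ, 1 ≤ b ∧ (∃ g ∈ J, g.natDegree ≤ i ∧ g.coeff i = b) ∧
      ∀ g ∈ J, g.natDegree ≤ i → (b : ℤ) ∣ g.coeff i := by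
  have hmem : ∀ x : ℤ, x ∈ J.leadingCoeffNth i ↔ ∃ g ∈ J, g.natDegree ≤ i ∧ g.coeff i = x := by
    intro x
    simp only [Ideal.leadingCoeffNth, Submodule.mem_map, lcoeff_apply,
      natDegree_le_iff_degree_le, and_assoc, Ideal.degreeLE, Submodule.mem_inf, mem_degreeLE]
    constructor
    · rintro ⟨y, h1, h2, h3⟩; exact ⟨y, h2, h1, h3⟩
    · rintro ⟨y, h1, h2, h3⟩; exact ⟨y, h2, h1, h3⟩
  obtain ⟨c, hcJ⟩ := (IsPrincipalIdealRing.principal (J.leadingCoeffNth i)).principal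
  replace hcJ : J.leadingCoeffNth i = Ideal.span {(c.natAbs : ℤ)} := by
    rw [hcJ]; exact (Int.span_natAbs c).symm
  have hdvd : ∀ g ∈ J, g.natDegree ≤ i → (c.natAbs : ℤ) ∣ g.coeff i := fun g hg hgd => by
    rw [← Ideal.mem_span_singleton, ← hcJ, hmem]
    exact ⟨g, hg, hgd, rfl⟩
  refine ⟨c.natAbs, ?_, ?_, hdvd⟩
  · by_contra h
    have h0 : c.natAbs = 0 := by omega
    have := hdvd g₀ h₀ hd
    rw [h0] at this
    exact hc (by simpa using this)
  · rw [← hmem, hcJ]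
    exact Ideal.mem_span_singleton_self _

/-- The positive generator `b` of the coefficients of `X ^ i` in the elements of `J` of degree `≤ i`
divides all these elements. In the inductive step, with generators `b = m * b'` in degrees `i` and
`i + 1`, an element `g` of degree `≤ i + 1` with coefficient `c * b'` is handled by cancelling the top
term of `m * g` against `c * X` times the element `b * H` of degree `i`. -/
theorem exists_content (J : Ideal ℤ[X]) {n : ℤ} (hn : n ≠ 0) (hnJ : C n ∈ J) (i : ℕ) :
    ∃ b : ℕ, 1 ≤ b ∧ (∃ H : ℤ[X], H.Monic ∧ H.natDegree = i ∧ C (b : ℤ) * H ∈ J) ∧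
      ∀ g ∈ J, g.natDegree ≤ i → C (b : ℤ) ∣ g := by
  induction i with
  | zero =>
    obtain ⟨b, hb, ⟨g, hg, hgd, hgb⟩, hdvd⟩ :=
      exists_leading_generator J 0 hnJ (by simp) (by simpa using hn)
    refine ⟨b, hb, ⟨1, monic_one, natDegree_one, ?_⟩, fun p hp hpd => ?_⟩
    · rw [eq_C_of_natDegree_le_zero hgd, hgb] at hg
      simpa using hg
    · rw [eq_C_of_natDegree_le_zero hpd]
      exact map_dvd C (hdvd p hp hpd)
  | succ i ih =>
    obtain ⟨b, hb, ⟨H, hH, hHd, hHJ⟩, hdvd⟩ := ih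
    have hXd : (X * (C (b : ℤ) * H)).natDegree ≤ i + 1 := by
      refine natDegree_mul_le.trans ?_
      have := natDegree_C_mul_le (b : ℤ) H
      rw [natDegree_X]; omega
    have hXc : (X * (C (b : ℤ) * H)).coeff (i + 1) = (b : ℤ) := by
      rw [coeff_X_mul, coeff_C_mul, ← hHd, hH.coeff_natDegree, mul_one]
    have hXJ := J.mul_mem_left X hHJ
    obtain ⟨b', hb', ⟨g', hg', hgd', hgb'⟩, hdvd'⟩ :=
      exists_leading_generator J (i + 1) hXJ hXd (by rw [hXc]; omega)
    have hbb := hdvd' _ hXJ hXd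
    rw [hXc] at hbb
    obtain ⟨m, hm⟩ := hbb
    have hm0 : m ≠ 0 := by rintro rfl; simp at hm; omega
    have key : ∀ g ∈ J, g.natDegree ≤ i + 1 → C (b' : ℤ) ∣ g := fun g hg hgd => by
      obtain ⟨c, hc⟩ := hdvd' g hg hgd
      have h1 : C m * g - C c * (X * (C (b : ℤ) * H)) ∈ J :=
        J.sub_mem (J.mul_mem_left _ hg) (J.mul_mem_left _ hXJ)
      have h2 : (C m * g - C c * (X * (C (b : ℤ) * H))).natDegree ≤ i := by
        rw [natDegree_le_iff_coeff_eq_zero]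
        intro N hN
        rcases Nat.lt_or_ge (i + 1) N with h | h
        · rw [coeff_sub, coeff_C_mul, coeff_C_mul, coeff_eq_zero_of_natDegree_lt (hgd.trans_lt h),
            coeff_eq_zero_of_natDegree_lt (hXd.trans_lt h)]; simp
        · obtain rfl : N = i + 1 := by omega
          rw [coeff_sub, coeff_C_mul, coeff_C_mul, hXc, hc, hm]; ring
      have h3 : C (b : ℤ) ∣ C m * g := by
        have h4 : C (b : ℤ) ∣ C c * (X * (C (b : ℤ) * H)) := ⟨C c * X * H, by ring⟩
        simpa using dvd_add (hdvd _ h1 h2) h4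
      rw [hm, mul_comm, C_mul] at h3
      exact (mul_dvd_mul_iff_left (C_ne_zero.2 hm0)).1 h3
    refine ⟨b', hb', ?_, key⟩
    obtain ⟨H', rfl⟩ := key g' hg' hgd'
    have hb0 : (b' : ℤ) ≠ 0 := by omega
    have h1 : H'.coeff (i + 1) = 1 := by
      rw [coeff_C_mul] at hgb'
      exact mul_left_cancel₀ hb0 (by rw [hgb', mul_one])
    have h2 : H'.natDegree ≤ i + 1 := by rwa [natDegree_C_mul hb0] at hgd'
    have h3 : H'.Monic := monic_of_natDegree_le_of_coeff_eq_one _ h2 h1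
    refine ⟨H', h3, le_antisymm h2 (le_natDegree_of_ne_zero (by rw [h1]; exact one_ne_zero)), hg'⟩

/-- The lattice `J_{<k+1}` is a multiple of a truncation of an ideal with a monic element of
degree `k`. -/
theorem exists_scaledLat {k : ℕ} {J : Ideal ℤ[X]} (hJ : idx J ≠ 0) :
    ∃ a J₀, 1 ≤ a ∧ HasMonic k J₀ ∧ lat (k + 1) J = scaledLat a (k + 1) J₀ := by
  have hnJ : C (idx J : ℤ) ∈ J := by
    have := J.toAddSubgroup.nsmul_index_mem (1 : ℤ[X])
    rw [nsmul_eq_mul, mul_one] at this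
    simpa [idx] using this
  obtain ⟨a, ha, ⟨H, hH, hHd, hHJ⟩, hdvd⟩ := exists_content J (by exact_mod_cast hJ) hnJ k
  -- `J₀` is the colon ideal `(J : a)`.
  let J₀ : Ideal ℤ[X] := Submodule.comap (LinearMap.mulLeft ℤ[X] (C (a : ℤ))) J
  have hmem : ∀ p, p ∈ J₀ ↔ C (a : ℤ) * p ∈ J := fun p => Iff.rfl
  refine ⟨a, J₀, ha, ⟨H, hHJ, hH, hHd⟩, ?_⟩
  have ha0 : (a : ℤ) ≠ 0 := by omega
  ext v
  rw [mem_lat, mem_scaledLat]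
  constructor
  · intro hv
    have hdeg := degree_coordHom_lt (k + 1) v
    obtain ⟨p, hp⟩ := hdvd _ hv (natDegree_le_iff_coeff_eq_zero.2 fun N hN =>
      coeff_eq_zero_of_degree_lt (hdeg.trans_le (by exact_mod_cast hN)))
    rw [hp, degree_C_mul ha0] at hdeg
    obtain ⟨w, rfl⟩ := exists_coordHom_eq _ _ hdeg
    refine ⟨w, ?_, coordHom_injective _ ?_⟩
    · rw [hmem, ← hp]; exact hv
    · rw [smul_coordHom, hp]
  · rintro ⟨w, hw, rfl⟩
    rw [smul_coordHom]
    exact hw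

/-! ### Ideals with a given truncation -/

/-- The ideals with a monic element of degree `k + 1` whose truncation `J_{<k+1}` is
`a • (J₀)_{<k+1}`. -/
def fibre (k a : ℕ) (J₀ : Ideal ℤ[X]) : Set (Ideal ℤ[X]) :=
  {J | HasMonic (k + 1) J ∧ lat (k + 1) J = scaledLat a (k + 1) J₀}

theorem scaledLat_le_lat (a d : ℕ) (J : Ideal ℤ[X]) : scaledLat a d J ≤ lat d J := by
  rintro _ ⟨w, hw, rfl⟩
  exact (lat d J).nsmul_mem hw a

theorem relIndex_scaledLat {k a : ℕ} (ha : 1 ≤ a) {J₀ : Ideal ℤ[X]} (hJ₀ : HasMonic k J₀)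
    (h0 : idx J₀ ≠ 0) : (scaledLat a (k + 1) J₀).relIndex (lat (k + 1) J₀) = a ^ (k + 1) := by
  have h1 := AddSubgroup.relIndex_mul_index (scaledLat_le_lat a (k + 1) J₀)
  rw [index_scaledLat ha, index_lat hJ₀.succ] at h1
  exact Nat.eq_of_mul_eq_mul_right (Nat.pos_of_ne_zero h0) h1

theorem thicken_mem_fibre {k a : ℕ} {J₀ : Ideal ℤ[X]} {h : ℤ[X]} (hh : h.Monic)
    (hk : h.natDegree = k) (hJ : h ∈ J₀) {v : Fin (k + 1) → ℤ} (hv : v ∈ lat (k + 1) J₀) :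
    thicken a J₀ (X * h + coordHom (k + 1) v) ∈ fibre k a J₀ := by
  obtain ⟨h1, h2⟩ := monic_X_mul_add hh hk v
  exact ⟨⟨_, self_mem_thicken _ _ _, h1, h2⟩,
    lat_thicken (J₀.add_mem (J₀.mul_mem_left _ hJ) hv) h1 h2⟩

/-- Every monic `f ∈ J` of degree `k + 1` differs from `X * h` by an element of `(J₀)_{<k+1}`, because
`a * (f - X * h)` lies in `J` and has degree `≤ k`; moreover `J = a J₀ + (f)`. -/
theorem exists_thicken_eq {k a : ℕ} (ha : 1 ≤ a) {J₀ J : Ideal ℤ[X]} {h : ℤ[X]} (hh : h.Monic)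
    (hk : h.natDegree = k) (hJ₀ : h ∈ J₀) (hJ : J ∈ fibre k a J₀) :
    ∃ v ∈ lat (k + 1) J₀, thicken a J₀ (X * h + coordHom (k + 1) v) = J := by
  obtain ⟨⟨f, hfJ, hf, hfd⟩, hlat⟩ := hJ
  have ha0 : (a : ℤ) ≠ 0 := by omega
  obtain ⟨h1, h2⟩ := monic_X_mul_add hh hk 0
  rw [map_zero, add_zero] at h1 h2
  have hsub : ∀ w, coordHom (k + 1) w ∈ J₀ → C (a : ℤ) * coordHom (k + 1) w ∈ J := fun w hw => by
    rw [← smul_coordHom, ← mem_lat, hlat]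
    exact ⟨w, hw, rfl⟩
  have hXf : (f - X * h).degree < ((k + 1 : ℕ) : WithBot ℕ) := by
    rw [← hfd, ← degree_eq_natDegree hf.ne_zero]
    refine degree_sub_lt_left ?_ hf.ne_zero (by rw [hf, h1])
    rw [degree_eq_natDegree hf.ne_zero, degree_eq_natDegree h1.ne_zero, hfd, h2]
  obtain ⟨v, hv⟩ := exists_coordHom_eq _ _ hXf
  have hah : C (a : ℤ) * h ∈ J := by
    obtain ⟨w, rfl⟩ := exists_coordHom_eq (k + 1) h (by
      rw [degree_eq_natDegree hh.ne_zero, hk]; exact_mod_cast Nat.lt_succ_self k)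
    exact hsub w hJ₀
  have hav : a • v ∈ scaledLat a (k + 1) J₀ := by
    rw [← hlat, mem_lat, smul_coordHom, hv, mul_sub, mul_left_comm]
    exact J.sub_mem (J.mul_mem_left _ hfJ) (J.mul_mem_left _ hah)
  have hvJ : v ∈ lat (k + 1) J₀ := by
    obtain ⟨w, hw, hwv⟩ := hav
    obtain rfl : w = v := by
      ext i
      have := congrFun hwv i
      simp at this
      omega
    exact hw
  refine ⟨v, hvJ, ?_⟩
  have hfv : X * h + coordHom (k + 1) v = f := by rw [hv]; ring
  have hfJ₀ : f ∈ J₀ := by rw [← hfv]; exact J₀.add_mem (J₀.mul_mem_left _ hJ₀) hvJ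
  rw [hfv]
  ext p
  rw [mem_thicken]
  constructor
  · rintro ⟨j, hj, q, rfl⟩
    obtain ⟨w, q', rfl⟩ := exists_div hf hfd j
    have hw : coordHom (k + 1) w ∈ J₀ := by
      simpa using J₀.sub_mem hj (J₀.mul_mem_left q' hfJ₀)
    rw [mul_add]
    exact J.add_mem (J.add_mem (hsub w hw) (J.mul_mem_left _ (J.mul_mem_left _ hfJ)))
      (J.mul_mem_left _ hfJ)
  · intro hp
    obtain ⟨u, q, rfl⟩ := exists_div hf hfd p
    have hu : u ∈ lat (k + 1) J := by
      simpa [mem_lat] using J.sub_mem hp (J.mul_mem_left q hfJ)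
    rw [hlat] at hu
    obtain ⟨w, hw, rfl⟩ := hu
    exact ⟨_, hw, q, by rw [← smul_coordHom]; rfl⟩

theorem thicken_eq_iff {k a : ℕ} {J₀ : Ideal ℤ[X]} {h : ℤ[X]} (hh : h.Monic)
    (hk : h.natDegree = k) (hJ : h ∈ J₀) {v w : Fin (k + 1) → ℤ} (hv : v ∈ lat (k + 1) J₀) :
    thicken a J₀ (X * h + coordHom (k + 1) v) = thicken a J₀ (X * h + coordHom (k + 1) w) ↔
      -v + w ∈ scaledLat a (k + 1) J₀ := by
  constructor
  · intro e
    rw [← (thicken_mem_fibre hh hk hJ hv).2, mem_lat]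
    have h1 := self_mem_thicken a J₀ (X * h + coordHom (k + 1) v)
    have h2 := self_mem_thicken a J₀ (X * h + coordHom (k + 1) w)
    rw [← e] at h2
    have := Ideal.sub_mem _ h2 h1
    rw [map_add, map_neg]
    convert this using 1
    ring
  · rintro ⟨u, hu, huv⟩
    have h1 : coordHom (k + 1) w = coordHom (k + 1) v + C (a : ℤ) * coordHom (k + 1) u := by
      rw [← smul_coordHom, ← map_add]
      congr 1
      change a • u = _ at huv
      rw [huv]; abel
    ext p
    rw [mem_thicken, mem_thicken, h1]
    constructor
    · rintro ⟨j, hj, q, rfl⟩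
      exact ⟨j - q * coordHom (k + 1) u, J₀.sub_mem hj (J₀.mul_mem_left _ hu), q, by ring⟩
    · rintro ⟨j, hj, q, rfl⟩
      exact ⟨j + q * coordHom (k + 1) u, J₀.add_mem hj (J₀.mul_mem_left _ hu), q, by ring⟩

/-- The fibre is in bijection with `M / a M`, where `M = (J₀)_{<k+1}`. -/
theorem card_fibre {k a : ℕ} (ha : 1 ≤ a) {J₀ : Ideal ℤ[X]} (hJ₀ : HasMonic k J₀)
    (h0 : idx J₀ ≠ 0) : (fibre k a J₀).Finite ∧ (fibre k a J₀).ncard = a ^ (k + 1) := by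
  have hrel := relIndex_scaledLat ha hJ₀ h0
  obtain ⟨h, hhJ, hh, hk⟩ := hJ₀
  let M := lat (k + 1) J₀
  let S := (scaledLat a (k + 1) J₀).addSubgroupOf M
  let F : M ⧸ S → fibre k a J₀ := fun x => Quotient.liftOn' x
    (fun v => ⟨thicken a J₀ (X * h + coordHom (k + 1) v), thicken_mem_fibre hh hk hhJ v.2⟩)
    (fun v w hvw => Subtype.ext ((thicken_eq_iff hh hk hhJ v.2).2
      (by simpa [S, AddSubgroup.mem_addSubgroupOf] using QuotientAddGroup.leftRel_apply.1 hvw)))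
  have hF : Function.Bijective F := by
    constructor
    · intro x y
      induction x using QuotientAddGroup.induction_on with | H v => ?_
      induction y using QuotientAddGroup.induction_on with | H w => ?_
      intro e
      refine QuotientAddGroup.eq.2 ?_
      have := (thicken_eq_iff hh hk hhJ v.2).1 (congrArg Subtype.val e)
      simpa [S, AddSubgroup.mem_addSubgroupOf] using this
    · rintro ⟨J, hJ⟩
      obtain ⟨v, hv, e⟩ := exists_thicken_eq ha hh hk hhJ hJ
      exact ⟨((⟨v, hv⟩ : M) : M ⧸ S), Subtype.ext e⟩
  have hcard : (fibre k a J₀).ncard = a ^ (k + 1) := by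
    rw [← Nat.card_coe_set_eq, ← Nat.card_congr (Equiv.ofBijective F hF), ← hrel]
    rfl
  exact ⟨Set.finite_of_ncard_ne_zero (by rw [hcard]; positivity), hcard⟩

/-! ### Counting recursions -/

/-- The ideals of `ℤ[X]` of finite index at most `N` which contain a monic polynomial of
degree `k`. -/
def boundedIdeals (k N : ℕ) : Set (Ideal ℤ[X]) := {J | HasMonic k J ∧ 1 ≤ idx J ∧ idx J ≤ N}

theorem ncard_disjoint_union {α ι : Type*} (S : Set α) (A : Finset ι) (F : ι → Set α)
    (hS : ∀ x, x ∈ S ↔ ∃ i ∈ A, x ∈ F i) (hfin : ∀ i ∈ A, (F i).Finite)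
    (hdisj : ∀ i ∈ A, ∀ j ∈ A, ∀ x, x ∈ F i → x ∈ F j → i = j) :
    S.Finite ∧ S.ncard = ∑ i ∈ A, (F i).ncard := by
  classical
  let G : ι → Finset α := fun i => if h : (F i).Finite then h.toFinset else ∅
  have hG : ∀ i ∈ A, (G i : Set α) = F i := fun i hi => by simp [G, hfin i hi]
  have hS' : S = (A.biUnion G : Finset α) := by
    ext x
    rw [hS, Finset.mem_coe, Finset.mem_biUnion]
    exact exists_congr fun i => and_congr_right fun hi => by rw [← hG i hi, Finset.mem_coe]
  refine ⟨hS' ▸ Finset.finite_toSet _, ?_⟩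
  rw [hS', Set.ncard_coe_finset, Finset.card_biUnion]
  · exact Finset.sum_congr rfl fun i hi => by rw [← hG i hi, Set.ncard_coe_finset]
  · intro i hi j hj hij
    refine Finset.disjoint_left.2 fun x hx hx' => hij (hdisj i hi j hj x ?_ ?_)
    · rw [← hG i hi]; exact hx
    · rw [← hG j hj]; exact hx'

/-- A positive index `a ^ (k + 1) * n` is at most `N` exactly when `n` is positive and at most
`⌊N / a ^ (k + 1)⌋`; in that case `a ≤ N`. -/
theorem index_bound {k N a n : ℕ} (ha : 1 ≤ a) :
    1 ≤ a ^ (k + 1) * n ∧ a ^ (k + 1) * n ≤ N ↔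
      a ∈ Finset.Icc 1 N ∧ 1 ≤ n ∧ n ≤ N / a ^ (k + 1) := by
  have hpos : 0 < a ^ (k + 1) := by positivity
  have hle : a ≤ a ^ (k + 1) := Nat.le_self_pow (by omega) a
  rw [Nat.le_div_iff_mul_le hpos, Finset.mem_Icc, mul_comm n]
  constructor
  · rintro ⟨h1, h2⟩
    have hn : 1 ≤ n := by
      rcases Nat.eq_zero_or_pos n with rfl | h
      · simp at h1
      · exact h
    exact ⟨⟨ha, by nlinarith⟩, hn, h2⟩
  · rintro ⟨-, h1, h2⟩
    exact ⟨Nat.mul_pos hpos h1, h2⟩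

theorem card_boundedIdeals_succ {k : ℕ} (hk : ∀ N, (boundedIdeals k N).Finite) (N : ℕ) :
    (boundedIdeals (k + 1) N).Finite ∧ (boundedIdeals (k + 1) N).ncard =
      ∑ a ∈ Finset.Icc 1 N, a ^ (k + 1) * (boundedIdeals k (N / a ^ (k + 1))).ncard := by
  let F : ℕ → Set (Ideal ℤ[X]) := fun a =>
    {J | ∃ J₀ ∈ boundedIdeals k (N / a ^ (k + 1)), J ∈ fibre k a J₀}
  have hF : ∀ a ∈ Finset.Icc 1 N, (F a).Finite ∧
      (F a).ncard = a ^ (k + 1) * (boundedIdeals k (N / a ^ (k + 1))).ncard := by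
    intro a ha
    have ha1 := (Finset.mem_Icc.1 ha).1
    have hc : ∀ J₀ ∈ (hk (N / a ^ (k + 1))).toFinset,
        (fibre k a J₀).Finite ∧ (fibre k a J₀).ncard = a ^ (k + 1) := fun J₀ hJ₀ => by
      rw [Set.Finite.mem_toFinset] at hJ₀
      exact card_fibre ha1 hJ₀.1 (by have := hJ₀.2.1; omega)
    obtain ⟨h1, h2⟩ := ncard_disjoint_union (F a) (hk (N / a ^ (k + 1))).toFinset (fibre k a)
      (fun J => by simp [F]) (fun J₀ hJ₀ => (hc J₀ hJ₀).1)
      (fun I hI I' hI' J hJ hJ' => by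
        rw [Set.Finite.mem_toFinset] at hI hI'
        exact (scaledLat_injective ha1 hI.1 hI'.1 (hJ.2.symm.trans hJ'.2)).2)
    refine ⟨h1, ?_⟩
    rw [h2, Finset.sum_congr rfl fun J₀ hJ₀ => (hc J₀ hJ₀).2, Finset.sum_const, smul_eq_mul,
      mul_comm, Set.ncard_eq_toFinset_card _ (hk _)]
  have hmem : ∀ J, J ∈ boundedIdeals (k + 1) N ↔ ∃ a ∈ Finset.Icc 1 N, J ∈ F a := fun J => by
    constructor
    · rintro ⟨hJ, hb1, hb2⟩
      obtain ⟨a, J₀, ha, hJ₀, e⟩ := exists_scaledLat (k := k) (J := J) (by omega)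
      have hidx := index_scaledLat (d := k + 1) ha (J := J₀)
      rw [← e, index_lat hJ, index_lat hJ₀.succ] at hidx
      rw [hidx] at hb1 hb2
      obtain ⟨haN, hb⟩ := (index_bound ha).1 ⟨hb1, hb2⟩
      exact ⟨a, haN, J₀, ⟨hJ₀, hb⟩, hJ, e⟩
    · rintro ⟨a, haN, J₀, ⟨hJ₀, hb⟩, hJ, e⟩
      have ha := (Finset.mem_Icc.1 haN).1
      have hidx := index_scaledLat (d := k + 1) ha (J := J₀)
      rw [← e, index_lat hJ, index_lat hJ₀.succ] at hidx
      refine ⟨hJ, ?_⟩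
      rw [hidx]
      exact (index_bound ha).2 ⟨haN, hb⟩
  have hdisj : ∀ a ∈ Finset.Icc 1 N, ∀ b ∈ Finset.Icc 1 N, ∀ J, J ∈ F a → J ∈ F b → a = b := by
    rintro a ha b hb J ⟨I, hI, hJ⟩ ⟨I', hI', hJ'⟩
    exact (scaledLat_injective (Finset.mem_Icc.1 ha).1 hI.1 hI'.1 (hJ.2.symm.trans hJ'.2)).1
  obtain ⟨h1, h2⟩ := ncard_disjoint_union (boundedIdeals (k + 1) N) (Finset.Icc 1 N) F
    hmem (fun a ha => (hF a ha).1) hdisj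
  exact ⟨h1, h2.trans (Finset.sum_congr rfl fun a ha => (hF a ha).2)⟩

theorem idx_top : idx ⊤ = 1 := by
  simp [idx]

theorem boundedIdeals_zero (N : ℕ) : boundedIdeals 0 N = if N = 0 then ∅ else {⊤} := by
  have h0 : ∀ J, HasMonic 0 J ↔ J = ⊤ := fun J => by
    constructor
    · rintro ⟨h, hJ, hh, hd⟩
      rw [hh.natDegree_eq_zero.1 hd] at hJ
      exact (Ideal.eq_top_iff_one J).2 hJ
    · rintro rfl
      exact ⟨1, trivial, monic_one, natDegree_one⟩
  ext J
  rw [boundedIdeals, Set.mem_ofPred_eq, h0]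
  split_ifs with h
  · simp only [Set.mem_empty_iff_false, iff_false]; omega
  · simp only [Set.mem_singleton_iff, and_iff_left_iff_imp]
    rintro rfl
    rw [idx_top]; omega

theorem finite_boundedIdeals (k N : ℕ) : (boundedIdeals k N).Finite := by
  induction k generalizing N with
  | zero => rw [boundedIdeals_zero]; split_ifs <;> simp
  | succ k ih => exact (card_boundedIdeals_succ ih N).1

theorem ncard_boundedIdeals_one (N : ℕ) :
    (boundedIdeals 1 N).ncard = ∑ a ∈ Finset.Icc 1 N, a := by
  rw [(card_boundedIdeals_succ (finite_boundedIdeals 0) N).2]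
  refine Finset.sum_congr rfl fun a ha => ?_
  rw [Finset.mem_Icc] at ha
  rw [boundedIdeals_zero, if_neg, Set.ncard_singleton, zero_add, pow_one, mul_one]
  rw [zero_add, pow_one]
  exact (Nat.div_pos ha.2 ha.1).ne'

theorem sum_card_idealLattices (k N : ℕ) :
    ∑ n ∈ Finset.Icc 1 N,
      Nat.card {Λ : AddSubgroup (Fin (k + 1) → ℤ) // Λ.index = n ∧ IsIdealLattice (k + 1) Λ} =
    ∑ a ∈ Finset.Icc 1 N, (boundedIdeals k (N / a ^ (k + 1))).ncard := by
  let S : Set (AddSubgroup (Fin (k + 1) → ℤ)) :=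
    {Λ | 1 ≤ Λ.index ∧ Λ.index ≤ N ∧ IsIdealLattice (k + 1) Λ}
  let G : ℕ → Set (AddSubgroup (Fin (k + 1) → ℤ)) := fun a =>
    Set.image (scaledLat a (k + 1)) (boundedIdeals k (N / a ^ (k + 1)))
  have hinj : ∀ a ∈ Finset.Icc 1 N,
      Set.InjOn (scaledLat a (k + 1)) (boundedIdeals k (N / a ^ (k + 1))) :=
    fun a ha I hI I' hI' e => (scaledLat_injective (Finset.mem_Icc.1 ha).1 hI.1 hI'.1 e).2
  have hmem : ∀ Λ, Λ ∈ S ↔ ∃ a ∈ Finset.Icc 1 N, Λ ∈ G a := fun Λ => by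
    constructor
    · rintro ⟨hb1, hb2, hΛ⟩
      obtain ⟨J, hJ, rfl⟩ := (isIdealLattice_iff _ _).1 hΛ
      obtain ⟨a, J₀, ha, hJ₀, e⟩ := exists_scaledLat (k := k) (J := J)
        (by rw [← index_lat hJ]; omega)
      rw [e, index_scaledLat ha, index_lat hJ₀.succ] at hb1 hb2
      obtain ⟨haN, hb⟩ := (index_bound ha).1 ⟨hb1, hb2⟩
      exact ⟨a, haN, J₀, ⟨hJ₀, hb⟩, e.symm⟩
    · rintro ⟨a, haN, J₀, ⟨hJ₀, hb⟩, rfl⟩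
      have ha := (Finset.mem_Icc.1 haN).1
      have := (index_bound ha).2 ⟨haN, hb⟩
      rw [← index_lat hJ₀.succ, ← index_scaledLat ha] at this
      exact ⟨this.1, this.2, isIdealLattice_scaledLat hJ₀⟩
  have hdisj : ∀ a ∈ Finset.Icc 1 N, ∀ b ∈ Finset.Icc 1 N, ∀ Λ, Λ ∈ G a → Λ ∈ G b → a = b := by
    rintro a ha b hb Λ ⟨I, hI, e⟩ ⟨I', hI', e'⟩
    exact (scaledLat_injective (Finset.mem_Icc.1 ha).1 hI.1 hI'.1 (e.trans e'.symm)).1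
  obtain ⟨h1, h2⟩ := ncard_disjoint_union S (Finset.Icc 1 N) G hmem
    (fun a _ => (finite_boundedIdeals _ _).image _) hdisj
  obtain ⟨-, h3⟩ := ncard_disjoint_union S (Finset.Icc 1 N)
    (fun n => {Λ | Λ.index = n ∧ IsIdealLattice (k + 1) Λ}) (fun Λ => by
      simp only [S, Set.mem_ofPred_eq, Finset.mem_Icc]
      constructor
      · rintro ⟨h1, h2, h3⟩; exact ⟨_, ⟨h1, h2⟩, rfl, h3⟩
      · rintro ⟨_, ⟨h1, h2⟩, rfl, h3⟩; exact ⟨h1, h2, h3⟩)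
    (fun n hn => h1.subset (by
      rw [Finset.mem_Icc] at hn
      rintro Λ ⟨rfl, h⟩; exact ⟨hn.1, hn.2, h⟩))
    (fun i _ j _ Λ hi hj => hi.1.symm.trans hj.1)
  calc _ = S.ncard := h3.symm
    _ = _ := h2
    _ = _ := Finset.sum_congr rfl fun a ha => (hinj a ha).ncard_image

theorem boundedIdeals_eq_empty (k : ℕ) : boundedIdeals k 0 = ∅ := by
  ext J
  simp only [boundedIdeals, Set.mem_ofPred_eq, Set.mem_empty_iff_false, iff_false]
  omega

/-! ### Asymptotics -/

/-- The sum over `a` is a series whose terms with `a = 0` or `a > N` vanish since `S 0 = 0`; dominated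
convergence applies because `S n = O(n ^ 2)`. -/
theorem tendsto_weighted_sum {S w : ℕ → ℝ} {L : ℝ} {k : ℕ} (hk : 1 ≤ k) (hS0 : S 0 = 0)
    (hw : ∀ a, 0 ≤ w a) (hsum : Summable fun a : ℕ => w a / (a : ℝ) ^ (2 * k))
    (hS : Tendsto (fun N : ℕ => S N / (N : ℝ) ^ 2) atTop (𝓝 L)) :
    Tendsto (fun N : ℕ => (∑ a ∈ Finset.Icc 1 N, w a * S (N / a ^ k)) / (N : ℝ) ^ 2) atTop
      (𝓝 ((∑' a : ℕ, w a / (a : ℝ) ^ (2 * k)) * L)) := by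
  obtain ⟨B, hB⟩ := (Metric.isBounded_range_of_tendsto _ hS).exists_norm_le
  have hB0 : 0 ≤ B := (norm_nonneg _).trans (hB _ ⟨0, rfl⟩)
  have hSB : ∀ n : ℕ, |S n| ≤ B * (n : ℝ) ^ 2 := fun n => by
    rcases Nat.eq_zero_or_pos n with rfl | hn
    · simp [hS0]
    · have h1 := hB _ ⟨n, rfl⟩
      have hn' : (0 : ℝ) < (n : ℝ) ^ 2 := by positivity
      rwa [Real.norm_eq_abs, abs_div, abs_of_pos hn', div_le_iff₀ hn'] at h1
  have hfin : ∀ N : ℕ, (∑ a ∈ Finset.Icc 1 N, w a * S (N / a ^ k)) / (N : ℝ) ^ 2 =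
      ∑' a : ℕ, w a * S (N / a ^ k) / (N : ℝ) ^ 2 := fun N => by
    rw [tsum_eq_sum (s := Finset.Icc 1 N), Finset.sum_div]
    intro a ha
    have : N / a ^ k = 0 := by
      rcases Nat.eq_zero_or_pos a with rfl | hpos
      · rw [zero_pow (by omega), Nat.div_zero]
      · have h1 : N < a := by
          by_contra h
          exact ha (Finset.mem_Icc.2 ⟨hpos, not_lt.1 h⟩)
        exact Nat.div_eq_of_lt (h1.trans_le (Nat.le_self_pow (by omega) a))
    rw [this, hS0, mul_zero, zero_div]
  simp_rw [hfin, ← tsum_mul_right]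
  refine tendsto_tsum_of_dominated_convergence (bound := fun a => w a / (a : ℝ) ^ (2 * k) * B)
    (hsum.mul_right B) (fun a => ?_) (Eventually.of_forall fun N a => ?_)
  · rcases Nat.eq_zero_or_pos a with rfl | hpos
    · simp [zero_pow (show k ≠ 0 by omega), zero_pow (show 2 * k ≠ 0 by omega), hS0]
    · have hpk : 0 < a ^ k := by positivity
      have hq : Tendsto (fun N : ℕ => N / a ^ k) atTop atTop :=
        Nat.tendsto_div_const_atTop hpk.ne'
      have hfrac : Tendsto (fun N : ℕ => ((N / a ^ k : ℕ) : ℝ) / (N : ℝ)) atTop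
          (𝓝 (((a : ℝ) ^ k)⁻¹)) := by
        have := (tendsto_nat_floor_mul_div_atTop (R := ℝ) (a := ((a : ℝ) ^ k)⁻¹)
          (by positivity)).comp tendsto_natCast_atTop_atTop
        refine this.congr fun N => ?_
        have h1 : ((a : ℝ) ^ k)⁻¹ * (N : ℝ) = (N : ℝ) / ((a ^ k : ℕ) : ℝ) := by
          push_cast; rw [div_eq_inv_mul]
        simp only [Function.comp_apply]
        rw [h1, Nat.floor_div_eq_div]
      have hmain := ((hS.comp hq).mul (hfrac.pow 2)).const_mul (w a)
      have hlim : w a * (L * (((a : ℝ) ^ k)⁻¹) ^ 2) = w a / (a : ℝ) ^ (2 * k) * L := by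
        rw [mul_comm 2 k, pow_mul, inv_pow]; ring
      rw [hlim] at hmain
      refine hmain.congr' ?_
      filter_upwards [hq.eventually_ge_atTop 1] with N hN
      have hN' : ((N / a ^ k : ℕ) : ℝ) ≠ 0 := by
        have : N / a ^ k ≠ 0 := by omega
        exact_mod_cast this
      simp only [Function.comp_apply]
      field_simp
  · rw [Real.norm_eq_abs, abs_div, abs_mul, abs_of_nonneg (hw a),
      abs_of_nonneg (by positivity : (0 : ℝ) ≤ (N : ℝ) ^ 2)]
    rcases Nat.eq_zero_or_pos N with rfl | hN
    · simp only [Nat.cast_zero, ne_eq, OfNat.ofNat_ne_zero, not_false_eq_true, zero_pow, div_zero]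
      exact mul_nonneg (div_nonneg (hw a) (by positivity)) hB0
    have hN' : (0 : ℝ) < (N : ℝ) ^ 2 := by positivity
    rw [div_le_iff₀ hN']
    have h1 : ((N / a ^ k : ℕ) : ℝ) ≤ (N : ℝ) / (a : ℝ) ^ k := by
      have := Nat.cast_div_le (α := ℝ) (m := N) (n := a ^ k)
      simpa using this
    calc w a * |S (N / a ^ k)| ≤ w a * (B * ((N : ℝ) / (a : ℝ) ^ k) ^ 2) := by
          refine mul_le_mul_of_nonneg_left ((hSB _).trans ?_) (hw a)
          gcongr
      _ = w a / (a : ℝ) ^ (2 * k) * B * (N : ℝ) ^ 2 := by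
          rw [mul_comm 2 k, pow_mul, div_pow]; ring

theorem tendsto_boundedIdeals (k : ℕ) :
    Tendsto (fun N : ℕ => ((boundedIdeals (k + 1) N).ncard : ℝ) / (N : ℝ) ^ 2) atTop
      (𝓝 (1 / 2 * ∏ i ∈ Finset.Icc 2 (k + 1), ∑' a : ℕ, 1 / (a : ℝ) ^ i)) := by
  induction k with
  | zero =>
    have h1 : Tendsto (fun N : ℕ => 1 / 2 + 1 / 2 * ((N : ℝ))⁻¹) atTop (𝓝 (1 / 2 + 1 / 2 * 0)) :=
      (tendsto_inv_atTop_nhds_zero_nat.const_mul _).const_add _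
    simp only [zero_add, Finset.Icc_eq_empty_of_lt (show 1 < 2 by norm_num), Finset.prod_empty,
      mul_one]
    rw [mul_zero, add_zero] at h1
    refine h1.congr' ?_
    filter_upwards [eventually_ge_atTop 1] with N hN
    have hsum : ((boundedIdeals 1 N).ncard : ℝ) * 2 = N * (N + 1) := by
      rw [ncard_boundedIdeals_one]
      have h2 : ∑ a ∈ Finset.Icc 1 N, a = ∑ a ∈ Finset.range (N + 1), a := by
        rw [Finset.range_eq_Ico, Finset.sum_eq_sum_Ico_succ_bot (Nat.succ_pos N), zero_add, zero_add]
        rfl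
      have h3 := Finset.sum_range_id_mul_two (N + 1)
      rw [h2]
      rw [Nat.add_sub_cancel] at h3
      rw [mul_comm (N : ℝ)]
      exact_mod_cast h3
    have hN0 : (N : ℝ) ≠ 0 := by
      have : N ≠ 0 := by omega
      exact_mod_cast this
    rw [eq_div_iff (by positivity)]
    field_simp
    linarith
  | succ k ih =>
    have hterm : ∀ a : ℕ, (a : ℝ) ^ (k + 2) / (a : ℝ) ^ (2 * (k + 2)) = 1 / (a : ℝ) ^ (k + 2) := by
      intro a
      rcases Nat.eq_zero_or_pos a with rfl | ha
      · simp
      · rw [two_mul, pow_add (a : ℝ) (k + 2) (k + 2), div_mul_cancel_left₀ (by positivity), one_div]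
    have h := tendsto_weighted_sum (S := fun N => ((boundedIdeals (k + 1) N).ncard : ℝ))
      (w := fun a => (a : ℝ) ^ (k + 2)) (k := k + 2) (by omega)
      (by simp [boundedIdeals_eq_empty]) (fun a => by positivity)
      (by simp_rw [hterm]; exact Real.summable_one_div_nat_pow.2 (by omega)) ih
    simp_rw [hterm] at h
    rw [Finset.prod_Icc_succ_top (by omega)]
    convert h using 2 with N
    · rw [(card_boundedIdeals_succ (finite_boundedIdeals (k + 1)) N).2]
      push_cast
      rfl
    · ring

/-- Corollary 3.3: for `d ≥ 2` the number of ideal lattices in `ℤ^d` of index at most `N`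
is asymptotic to `c·N²` with `c = (∏_{i=2}^{d-1} ζ(i))·ζ(2d)/2`. -/
theorem ideal_lattice_count_asymptotic (d : ℕ) (hd : 2 ≤ d) :
    Tendsto (fun N : ℕ =>
        (((∑ n ∈ Finset.Icc 1 N,
            (Nat.card {Λ : AddSubgroup (Fin d → ℤ) //
              Λ.index = n ∧ IsIdealLattice d Λ} : ℝ)) / (N : ℝ) ^ 2 : ℝ) : ℂ))
      atTop
      (𝓝 ((1 / 2) * (∏ i ∈ Finset.Icc 2 (d - 1), riemannZeta (i : ℂ)) *
        riemannZeta ((2 * d : ℕ) : ℂ))) := by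
  obtain ⟨k, rfl⟩ : ∃ k, d = k + 2 := ⟨d - 2, by omega⟩
  have hz : ∀ i : ℕ, 2 ≤ i → riemannZeta (i : ℂ) = ((∑' a : ℕ, 1 / (a : ℝ) ^ i : ℝ) : ℂ) := by
    intro i hi
    rw [zeta_nat_eq_tsum_of_gt_one (by omega)]
    push_cast
    rfl
  have hlim : (1 / 2) * (∏ i ∈ Finset.Icc 2 (k + 2 - 1), riemannZeta (i : ℂ)) *
      riemannZeta ((2 * (k + 2) : ℕ) : ℂ) =
      (((∑' a : ℕ, 1 / (a : ℝ) ^ (2 * (k + 2))) *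
        (1 / 2 * ∏ i ∈ Finset.Icc 2 (k + 1), ∑' a : ℕ, 1 / (a : ℝ) ^ i) : ℝ) : ℂ) := by
    rw [hz (2 * (k + 2)) (by omega),
      Finset.prod_congr rfl fun i hi => hz i (Finset.mem_Icc.1 hi).1, Complex.ofReal_mul,
      Complex.ofReal_mul, Complex.ofReal_prod, show k + 2 - 1 = k + 1 by omega, mul_comm]
    simp
  rw [hlim]
  refine (Complex.continuous_ofReal.tendsto _).comp ?_
  have h := tendsto_weighted_sum (S := fun N => ((boundedIdeals (k + 1) N).ncard : ℝ))
    (w := fun _ => 1) (k := k + 2) (by omega) (by simp [boundedIdeals_eq_empty])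
    (fun _ => zero_le_one) (Real.summable_one_div_nat_pow.2 (by omega)) (tendsto_boundedIdeals k)
  refine h.congr fun N => ?_
  have := sum_card_idealLattices (k + 1) N
  simp only [one_mul]
  congr 1
  exact_mod_cast this.symm
end

section
/- For every positive integer n, the number of ideals I of ℤ[X] with |ℤ[X]/I| = n equals n times the number of finitely supported sequences (b_i)_{i≥1} of positive integers (meaning b_i = 1 for all but finitely many i) such that ∏_{i≥1} b_i^i = n. -/
/-!
For an ideal `J` of `ℤ[X]` of finite index let `c_k` be the positive generator of the ideal of
coefficients of `X ^ k` of the elements of `J` of degree at most `k`. Then `c_{k+1} ∣ c_k`,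
`c_k = 1` for large `k` and `∏ c_k = n`; with `b_i = c_{i-1} / c_i` this reads `∏ b_i ^ i = n`. The
theorem holds because every sequence `b` arises from exactly `∏ b_i ^ i = n` ideals.

The count is carried out by splitting off the last `b_i`. If `J` contains a monic `f` of degree
`m + 1`, put `b = c_m` and `I = (J : b)`. All elements of `J` of degree at most `m` are divisible by
`b` (`map_eq_zero`), so `J = b I + (f)`, and `I` contains a monic polynomial of degree `m`
(`exists_eq_lift`). Conversely, for `I` containing a monic polynomial of degree `m` and `f ∈ I` monic
of degree `m + 1`, the ideal `b I + (f)` determines `b` and `I` (`eq_of_lift_eq`) and has index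
`b ^ (m + 1)` in `I` (`card_quotient_lift`). With `M` the lattice of elements of `I` of degree
at most `m`, the ideal depends only on the class of `f` modulo `b M`, so there are
`|M / b M| = b ^ (m + 1)` of them (`card_fiber`). Hence the number `A(m, n)` of ideals of index `n`
containing a monic polynomial of degree `m` satisfies
`A(m + 1, n) = ∑ b ^ (m + 1) * A(m, n / b ^ (m + 1))`, the sum being over `b` with
`b ^ (m + 1) ∣ n`, and so does `n` times the number of `(b_1, …, b_m)` with `∏ b_i ^ i = n`
(`card_A`). Finally, every ideal of index `n` contains a monic polynomial of degree `n`
(`hasMonic_of_card`).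
-/

namespace CardIdeals

open Polynomial

/-! ### The ideals `b I + (f)` -/

/-- The ideal `b I + (f)` of `ℤ[X]`. -/
noncomputable def lift (b : ℕ) (I : Ideal ℤ[X]) (f : ℤ[X]) : Ideal ℤ[X] :=
  Ideal.span {f} ⊔ Ideal.span {C (b : ℤ)} * I

lemma C_mul_modByMonic' (c : ℤ) (p f : ℤ[X]) : (C c * p) %ₘ f = C c * (p %ₘ f) := by
  rw [← smul_eq_C_mul, smul_modByMonic, smul_eq_C_mul]

lemma C_mul_cancel {b : ℕ} (hb : 0 < b) {p q : ℤ[X]}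
    (h : C (b : ℤ) * p = C (b : ℤ) * q) : p = q := by
  have : C (b : ℤ) ≠ 0 := by
    rw [Ne, C_eq_zero]; exact_mod_cast hb.ne'
  exact mul_left_cancel₀ this h

lemma modByMonic_mem_iff {I : Ideal ℤ[X]} {f : ℤ[X]} (hfI : f ∈ I) (h : ℤ[X]) :
    h %ₘ f ∈ I ↔ h ∈ I := by
  have h1 := modByMonic_add_div h f
  have h2 : f * (h /ₘ f) ∈ I := I.mul_mem_right _ hfI
  constructor
  · intro h3
    rw [← h1]
    exact I.add_mem h3 h2
  · intro h3
    rw [← h1] at h3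
    exact (I.add_mem_iff_left h2).1 h3

lemma self_mem_lift (b : ℕ) (I : Ideal ℤ[X]) (f : ℤ[X]) : f ∈ lift b I f :=
  Ideal.mem_sup_left (Ideal.mem_span_singleton_self f)

lemma C_mul_mem_lift {b : ℕ} {I : Ideal ℤ[X]} {f r : ℤ[X]} (hr : r ∈ I) :
    C (b : ℤ) * r ∈ lift b I f :=
  Ideal.mem_sup_right (Ideal.mul_mem_mul (Ideal.mem_span_singleton_self _) hr)

lemma lift_le {b : ℕ} {I : Ideal ℤ[X]} {f : ℤ[X]} (hf : f ∈ I) : lift b I f ≤ I :=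
  sup_le ((Ideal.span_singleton_le_iff_mem _).2 hf) Ideal.mul_le_right

/-- For monic `f ∈ I`, the remainders modulo `f` of the elements of `b I + (f)` are exactly the
`b`-multiples of elements of `I`. -/
lemma mem_lift_iff {b : ℕ} {I : Ideal ℤ[X]} {f : ℤ[X]} (hf : f.Monic) (hfI : f ∈ I) (h : ℤ[X]) :
    h ∈ lift b I f ↔ ∃ r ∈ I, h %ₘ f = C (b : ℤ) * r := by
  constructor
  · intro hh
    obtain ⟨q, w, hw, rfl⟩ := Ideal.mem_span_singleton_sup.1 hh
    obtain ⟨u, hu, rfl⟩ := Ideal.mem_span_singleton_mul.1 hw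
    refine ⟨u %ₘ f, (modByMonic_mem_iff hfI u).2 hu, ?_⟩
    rw [add_modByMonic, mul_self_modByMonic hf, zero_add, C_mul_modByMonic']
  · rintro ⟨r, hr, h1⟩
    rw [← modByMonic_mem_iff (self_mem_lift b I f), h1]
    exact C_mul_mem_lift hr

lemma C_mul_mem_lift_iff {b : ℕ} (hb : 0 < b) {I : Ideal ℤ[X]} {f : ℤ[X]} (hf : f.Monic)
    (hfI : f ∈ I) (h : ℤ[X]) : C (b : ℤ) * h ∈ lift b I f ↔ h ∈ I := by
  refine ⟨fun hh => ?_, C_mul_mem_lift⟩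
  obtain ⟨r, hr, h1⟩ := (mem_lift_iff hf hfI _).1 hh
  rw [C_mul_modByMonic'] at h1
  rw [← modByMonic_mem_iff hfI, C_mul_cancel hb h1]
  exact hr

lemma degree_sub_lt_of_monic {f f' : ℤ[X]} (hf : f.Monic) (hf' : f'.Monic)
    (hd : f.natDegree = f'.natDegree) : (f - f').degree < f'.degree := by
  have hd' : f.degree = f'.degree := by
    rw [degree_eq_natDegree hf.ne_zero, degree_eq_natDegree hf'.ne_zero, hd]
  rw [← hd']
  exact degree_sub_lt_left hd' hf.ne_zero (by rw [hf, hf'])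

lemma lift_eq_lift_iff {b : ℕ} {I : Ideal ℤ[X]} {f f' : ℤ[X]} (hf : f.Monic) (hf' : f'.Monic)
    (hfI' : f' ∈ I) (hd : f.natDegree = f'.natDegree) :
    lift b I f = lift b I f' ↔ ∃ r ∈ I, f - f' = C (b : ℤ) * r := by
  constructor
  · intro h
    have h1 : f - f' ∈ lift b I f' :=
      Ideal.sub_mem _ (h ▸ self_mem_lift b I f) (self_mem_lift b I f')
    rw [mem_lift_iff hf' hfI',
      (modByMonic_eq_self_iff hf').2 (degree_sub_lt_of_monic hf hf' hd)] at h1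
    exact h1
  · rintro ⟨r, hr, h⟩
    apply le_antisymm
    · refine sup_le ((Ideal.span_singleton_le_iff_mem _).2 ?_) le_sup_right
      rw [← sub_add_cancel f f', h]
      exact Ideal.add_mem _ (C_mul_mem_lift hr) (self_mem_lift b I f')
    · refine sup_le ((Ideal.span_singleton_le_iff_mem _).2 ?_) le_sup_right
      rw [← sub_sub_cancel f f', h]
      exact Ideal.sub_mem _ (self_mem_lift b I f) (C_mul_mem_lift hr)

/-- The ideal `I` contains a monic polynomial of degree `m`. -/
def HasMonic (m : ℕ) (I : Ideal ℤ[X]) : Prop := ∃ f ∈ I, f.Monic ∧ f.natDegree = m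

/-- `b` can be recovered from `b I + (f)`: it generates the ideal of coefficients of `X ^ m` of the
elements of degree at most `m`. -/
lemma dvd_of_lift_eq {m b b' : ℕ} {I I' : Ideal ℤ[X]} {f f' : ℤ[X]} (hI : HasMonic m I)
    (hf' : f'.Monic) (hfI' : f' ∈ I') (hd' : f'.natDegree = m + 1)
    (h : lift b I f = lift b' I' f') : b' ∣ b := by
  obtain ⟨g, hgI, hg, hgd⟩ := hI
  have h1 : C (b : ℤ) * g ∈ lift b' I' f' := h ▸ C_mul_mem_lift hgI
  obtain ⟨r, -, h2⟩ := (mem_lift_iff hf' hfI' _).1 h1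
  have hdeg : g.degree < f'.degree := by
    rw [degree_eq_natDegree hg.ne_zero, degree_eq_natDegree hf'.ne_zero, hgd, hd']
    exact_mod_cast Nat.lt_succ_self m
  rw [C_mul_modByMonic', (modByMonic_eq_self_iff hf').2 hdeg] at h2
  have h3 := congrArg (fun p => coeff p m) h2
  simp only [coeff_C_mul] at h3
  have h4 : g.coeff m = 1 := by rw [← hgd]; exact hg
  rw [h4, mul_one] at h3
  exact Int.natCast_dvd_natCast.1 ⟨_, h3⟩

lemma eq_of_lift_eq {m b b' : ℕ} (hb : 0 < b) {I I' : Ideal ℤ[X]} {f f' : ℤ[X]}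
    (hI : HasMonic m I) (hI' : HasMonic m I')
    (hf : f.Monic) (hfI : f ∈ I) (hd : f.natDegree = m + 1)
    (hf' : f'.Monic) (hfI' : f' ∈ I') (hd' : f'.natDegree = m + 1)
    (h : lift b I f = lift b' I' f') : b = b' ∧ I = I' := by
  have hbb : b = b' := Nat.dvd_antisymm (dvd_of_lift_eq hI' hf hfI hd h.symm)
    (dvd_of_lift_eq hI hf' hfI' hd' h)
  subst hbb
  refine ⟨rfl, Ideal.ext fun x => ?_⟩
  rw [← C_mul_mem_lift_iff hb hf hfI, h, C_mul_mem_lift_iff hb hf' hfI']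

/-- Let `J` contain a monic `f` of degree `m + 1` and suppose that `b` divides the coefficient of
`X ^ m` of every element of `J` of degree at most `m`. Then `b` divides all such elements. If
`h` were nonzero modulo `b`, of degree `k` there, then the remainder of `X ^ (m - k) * h` modulo `f`
would have its coefficient of `X ^ m` nonzero modulo `b`. -/
lemma map_eq_zero {m b : ℕ} {J : Ideal ℤ[X]} {f : ℤ[X]} (hf : f.Monic)
    (hfJ : f ∈ J) (hd : f.natDegree = m + 1)
    (hdiv : ∀ h ∈ J, h.degree < f.degree → (b : ℤ) ∣ h.coeff m)
    {h : ℤ[X]} (hh : h ∈ J) (hdeg : h.degree < f.degree) :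
    h.map (Int.castRingHom (ZMod b)) = 0 := by
  by_contra hne
  have hnt : Nontrivial (ZMod b) := by
    by_contra hs
    rw [not_nontrivial_iff_subsingleton] at hs
    exact hne (Subsingleton.elim _ _)
  set φ := Int.castRingHom (ZMod b) with hφ
  have hk : (h.map φ).natDegree ≤ m := by
    have h0 : h ≠ 0 := by rintro rfl; simp at hne
    have h1 := natDegree_lt_natDegree h0 hdeg
    have h2 : (h.map φ).natDegree ≤ h.natDegree := natDegree_map_le
    omega
  set k := (h.map φ).natDegree with hkdef
  have hfm : (f.map φ).Monic := hf.map φ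
  have hq : (X ^ (m - k) * h) %ₘ f ∈ J :=
    (modByMonic_mem_iff hfJ _).2 (J.mul_mem_left _ hh)
  have hc := hdiv _ hq (degree_modByMonic_lt _ hf)
  have hmap : ((X ^ (m - k) * h) %ₘ f).map φ = X ^ (m - k) * h.map φ := by
    rw [map_modByMonic φ hf, Polynomial.map_mul, Polynomial.map_pow, map_X,
      modByMonic_eq_self_iff hfm]
    rw [mul_comm, (monic_X_pow (m - k)).degree_mul, degree_X_pow, degree_eq_natDegree hne, ← hkdef,
      degree_eq_natDegree hfm.ne_zero, hf.natDegree_map, hd]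
    norm_cast
    omega
  have hz : (((X ^ (m - k) * h) %ₘ f).map φ).coeff m = 0 := by
    rw [coeff_map, hφ, eq_intCast]
    exact (ZMod.intCast_zmod_eq_zero_iff_dvd _ _).2 hc
  rw [hmap, coeff_X_pow_mul', if_pos (by omega), show m - (m - k) = k by omega] at hz
  exact hne (leadingCoeff_eq_zero.1 hz)

/-- Every finite-index ideal `J` containing a monic `f` of degree `m + 1` is of the form
`b I + (f)`, where `b > 0` generates the ideal of coefficients of `X ^ m` in degree at most `m`, and
`I = (J : b)`. -/
lemma exists_eq_lift {m : ℕ} {J : Ideal ℤ[X]} (hJ : Nat.card (ℤ[X] ⧸ J) ≠ 0) {f : ℤ[X]}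
    (hf : f.Monic) (hfJ : f ∈ J) (hd : f.natDegree = m + 1) :
    ∃ b : ℕ, 0 < b ∧ ∃ I : Ideal ℤ[X], HasMonic m I ∧ f ∈ I ∧ J = lift b I f := by
  have hfdeg : f.degree = ((m + 1 : ℕ) : WithBot ℕ) := by
    rw [degree_eq_natDegree hf.ne_zero, hd]
  let K : Submodule ℤ ℤ := (J.restrictScalars ℤ ⊓ degreeLT ℤ (m + 1)).map (lcoeff ℤ m)
  have hK : ∀ x, x ∈ K ↔ ∃ h ∈ J, h.degree < f.degree ∧ h.coeff m = x := by
    intro x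
    simp only [K, Submodule.mem_map, Submodule.mem_inf, mem_degreeLT, lcoeff_apply,
      Submodule.restrictScalars_mem, hfdeg, and_assoc]
  obtain ⟨d, hdK⟩ := (IsPrincipalIdealRing.principal (K : Ideal ℤ))
  have hdK' : ∀ x, x ∈ K ↔ (d.natAbs : ℤ) ∣ x := by
    intro x
    rw [hdK, Int.natAbs_dvd]
    exact Ideal.mem_span_singleton
  generalize hbd : d.natAbs = b at hdK'
  have hdiv : ∀ h ∈ J, h.degree < f.degree → (b : ℤ) ∣ h.coeff m := fun h hh hdeg =>
    (hdK' _).1 ((hK _).2 ⟨h, hh, hdeg, rfl⟩)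
  have hb : 0 < b := by
    -- `N = |ℤ[X]/J|` kills the quotient, so `N X ^ m ∈ J`.
    set N := Nat.card (ℤ[X] ⧸ J) with hN
    have h1 : C (N : ℤ) * X ^ m ∈ J := by
      rw [← Ideal.Quotient.eq_zero_iff_mem]
      have h2 : N • (Ideal.Quotient.mk J (X ^ m)) = 0 := card_nsmul_eq_zero'
      rw [← h2, nsmul_eq_mul]
      simp
    have h3 := hdiv _ h1 (by
      rw [hfdeg]
      refine (degree_C_mul_X_pow_le _ _).trans_lt ?_
      exact_mod_cast Nat.lt_succ_self m)
    simp only [coeff_C_mul, coeff_X_pow_self, mul_one] at h3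
    exact Nat.pos_of_dvd_of_pos (Int.natCast_dvd_natCast.1 h3) (Nat.pos_of_ne_zero hJ)
  have hdvd : ∀ h ∈ J, h.degree < f.degree → ∃ r, h = C (b : ℤ) * r := by
    intro h hh hdeg
    have h1 := map_eq_zero hf hfJ hd hdiv hh hdeg
    refine (C_dvd_iff_dvd_coeff _ _).2 fun i => ?_
    have h2 := congrArg (fun p => coeff p i) h1
    simp only [coeff_map, eq_intCast, coeff_zero] at h2
    exact (ZMod.intCast_zmod_eq_zero_iff_dvd _ _).1 h2
  let I : Ideal ℤ[X] := Submodule.comap (LinearMap.mulLeft ℤ[X] (C (b : ℤ))) J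
  have hI : ∀ x, x ∈ I ↔ C (b : ℤ) * x ∈ J := fun x => Iff.rfl
  have hfI : f ∈ I := (hI f).2 (J.mul_mem_left _ hfJ)
  refine ⟨b, hb, I, ?_, hfI, ?_⟩
  · obtain ⟨h, hh, hdeg, hc⟩ := (hK b).1 ((hdK' b).2 dvd_rfl)
    obtain ⟨g, rfl⟩ := hdvd h hh hdeg
    have hb' : (b : ℤ) ≠ 0 := by exact_mod_cast hb.ne'
    have hgm : g.coeff m = 1 := by
      rw [coeff_C_mul] at hc
      exact mul_left_cancel₀ hb' (by rw [hc, mul_one])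
    rw [degree_C_mul hb', hfdeg] at hdeg
    have hle : g.natDegree ≤ m := by
      have := (natDegree_lt_iff_degree_lt (by rintro rfl; simp at hgm)).2 hdeg
      omega
    have hgd : g.natDegree = m :=
      le_antisymm hle (le_natDegree_of_ne_zero (by rw [hgm]; exact one_ne_zero))
    exact ⟨g, (hI g).2 hh, by rw [Monic, leadingCoeff, hgd, hgm], hgd⟩
  · ext h
    rw [mem_lift_iff hf hfI]
    constructor
    · intro hh
      have hr : h %ₘ f ∈ J := (modByMonic_mem_iff hfJ h).2 hh
      obtain ⟨r, hr'⟩ := hdvd _ hr (degree_modByMonic_lt _ hf)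
      exact ⟨r, (hI r).2 (hr' ▸ hr), hr'⟩
    · rintro ⟨r, hr, h1⟩
      rw [← modByMonic_mem_iff hfJ, h1]
      exact hr

/-! ### Indices -/

/-- The additive group of polynomials of degree less than `k`. -/
noncomputable def V (k : ℕ) : AddSubgroup ℤ[X] := (degreeLT ℤ k).toAddSubgroup

/-- The additive group of elements of `I` of degree less than `k`. -/
noncomputable def low (k : ℕ) (I : Ideal ℤ[X]) : AddSubgroup ℤ[X] :=
  Submodule.toAddSubgroup I ⊓ V k

/-- Multiplication by `b` on `ℤ[X]`. -/
noncomputable def mulB (b : ℕ) : ℤ[X] →+ ℤ[X] := AddMonoidHom.mulLeft (C (b : ℤ))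

lemma mulB_apply (b : ℕ) (p : ℤ[X]) : mulB b p = C (b : ℤ) * p := rfl

lemma mulB_injective {b : ℕ} (hb : 0 < b) : Function.Injective (mulB b) :=
  fun _ _ h => C_mul_cancel hb h

lemma mem_V {k : ℕ} {p : ℤ[X]} : p ∈ V k ↔ p.degree < k := mem_degreeLT

lemma mem_low {k : ℕ} {I : Ideal ℤ[X]} {p : ℤ[X]} : p ∈ low k I ↔ p ∈ I ∧ p.degree < k := by
  rw [low, AddSubgroup.mem_inf, mem_V]
  rfl

lemma mulB_mem_V_iff {b : ℕ} (hb : 0 < b) {k : ℕ} {p : ℤ[X]} : mulB b p ∈ V k ↔ p ∈ V k := by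
  rw [mem_V, mem_V, mulB_apply, degree_C_mul (by exact_mod_cast hb.ne')]

lemma map_mulB_V_le {b : ℕ} (hb : 0 < b) (k : ℕ) : (V k).map (mulB b) ≤ V k := by
  rintro _ ⟨p, hp, rfl⟩
  exact (mulB_mem_V_iff hb).2 hp

lemma map_mulB_low_le {b : ℕ} (hb : 0 < b) (k : ℕ) (I : Ideal ℤ[X]) :
    (low k I).map (mulB b) ≤ low k I := by
  rintro _ ⟨p, hp, rfl⟩
  exact ⟨I.mul_mem_left _ hp.1, (mulB_mem_V_iff hb).2 hp.2⟩

/-- The vector of the first `k` coefficients modulo `b`. -/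
noncomputable def coeffMod (b k : ℕ) : ℤ[X] →+ (Fin k → ZMod b) where
  toFun p i := (p.coeff i : ZMod b)
  map_zero' := by ext; simp
  map_add' p q := by ext; simp

lemma relIndex_V {b : ℕ} (hb : 0 < b) (k : ℕ) :
    ((V k).map (mulB b)).relIndex (V k) = b ^ k := by
  have h1 : (V k).map (mulB b) = (coeffMod b k).ker ⊓ V k := by
    ext p
    constructor
    · rintro ⟨q, hq, rfl⟩
      refine ⟨?_, (mulB_mem_V_iff hb).2 hq⟩
      ext i
      simp [coeffMod, mulB_apply]
    · rintro ⟨hp, hpV⟩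
      have : C (b : ℤ) ∣ p := by
        refine (C_dvd_iff_dvd_coeff _ _).2 fun i => ?_
        by_cases hi : i < k
        · exact (ZMod.intCast_zmod_eq_zero_iff_dvd _ _).1 (congrFun hp ⟨i, hi⟩)
        · rw [coeff_eq_zero_of_degree_lt ((mem_V.1 hpV).trans_le (by exact_mod_cast not_lt.1 hi))]
          exact dvd_zero _
      obtain ⟨q, rfl⟩ := this
      exact ⟨q, (mulB_mem_V_iff hb).1 hpV, rfl⟩
  have h2 : (V k).map (coeffMod b k) = ⊤ := by
    rw [eq_top_iff]
    intro v _
    choose w hw using fun i => ZMod.intCast_surjective (v i)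
    refine ⟨((degreeLTEquiv ℤ k).symm w : ℤ[X]), ((degreeLTEquiv ℤ k).symm w).2, ?_⟩
    ext i
    have h3 : ((degreeLTEquiv ℤ k).symm w : ℤ[X]).coeff i = w i :=
      congrFun ((degreeLTEquiv ℤ k).apply_symm_apply w) i
    simp [coeffMod, h3, hw]
  have : NeZero b := ⟨hb.ne'⟩
  rw [h1, AddSubgroup.inf_relIndex_right, AddSubgroup.relIndex_ker, h2]
  simp [Nat.card_eq_fintype_card, ZMod.card]

lemma index_eq (I : Ideal ℤ[X]) :
    (Submodule.toAddSubgroup I).index = Nat.card (ℤ[X] ⧸ I) := rfl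

/-- The elements of degree less than `k` of a finite-index ideal form a lattice `M` of rank `k`,
whence `[M : b M] = b ^ k`. -/
lemma relIndex_low {b : ℕ} (hb : 0 < b) (k : ℕ) {I : Ideal ℤ[X]}
    (hI : Nat.card (ℤ[X] ⧸ I) ≠ 0) :
    ((low k I).map (mulB b)).relIndex (low k I) = b ^ k := by
  have h0 : (low k I).relIndex (V k) ≠ 0 := by
    rw [low, AddSubgroup.inf_relIndex_right]
    intro h
    have := AddSubgroup.relIndex_dvd_index_of_normal (Submodule.toAddSubgroup I) (V k)
    rw [h, zero_dvd_iff, index_eq] at this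
    exact hI this
  have hle : low k I ≤ V k := inf_le_right
  have h1 := AddSubgroup.relIndex_mul_relIndex _ _ _ (map_mulB_low_le hb k I) hle
  have h2 := AddSubgroup.relIndex_mul_relIndex _ _ _
    (AddSubgroup.map_mono (f := mulB b) hle) (map_mulB_V_le hb k)
  rw [AddSubgroup.relIndex_map_map_of_injective _ _ (mulB_injective hb), relIndex_V hb, ← h1,
    mul_comm] at h2
  exact (Nat.eq_of_mul_eq_mul_right (Nat.pos_of_ne_zero h0) h2).symm

lemma card_quotient_lift {b : ℕ} (hb : 0 < b) {k : ℕ} {I : Ideal ℤ[X]}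
    (hI : Nat.card (ℤ[X] ⧸ I) ≠ 0) {f : ℤ[X]} (hf : f.Monic) (hfI : f ∈ I)
    (hd : f.natDegree = k) :
    Nat.card (ℤ[X] ⧸ lift b I f) = b ^ k * Nat.card (ℤ[X] ⧸ I) := by
  have hfdeg : f.degree = (k : WithBot ℕ) := by
    rw [degree_eq_natDegree hf.ne_zero, hd]
  have h1 : Submodule.toAddSubgroup (lift b I f) ⊓ low k I = (low k I).map (mulB b) := by
    ext p
    constructor
    · rintro ⟨hp, hp'⟩
      obtain ⟨hpI, hpd⟩ := mem_low.1 hp'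
      obtain ⟨r, hr, h2⟩ := (mem_lift_iff hf hfI p).1 hp
      rw [(modByMonic_eq_self_iff hf).2 (hfdeg ▸ hpd)] at h2
      subst h2
      exact ⟨r, ⟨hr, (mulB_mem_V_iff hb).1 (mem_V.2 hpd)⟩, rfl⟩
    · rintro ⟨r, hr, rfl⟩
      exact ⟨C_mul_mem_lift hr.1, map_mulB_low_le hb k I ⟨r, hr, rfl⟩⟩
  have h2 : low k I ⊔ Submodule.toAddSubgroup (lift b I f) = Submodule.toAddSubgroup I := by
    apply le_antisymm
    · exact sup_le inf_le_left (lift_le hfI)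
    · intro p hp
      rw [← modByMonic_add_div p f]
      refine AddSubgroup.add_mem_sup (mem_low.2 ⟨(modByMonic_mem_iff hfI p).2 hp, ?_⟩) ?_
      · rw [← hfdeg]
        exact degree_modByMonic_lt _ hf
      · exact Ideal.mul_mem_right _ _ (self_mem_lift b I f)
  rw [← index_eq, ← index_eq, ← AddSubgroup.relIndex_mul_index
    (show Submodule.toAddSubgroup (lift b I f) ≤ Submodule.toAddSubgroup I from lift_le hfI)]
  congr 1
  rw [← h2, AddSubgroup.relIndex_sup_right, ← AddSubgroup.inf_relIndex_right, h1,
    relIndex_low hb k hI]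

/-- The ideals of the form `b I + (f)` with `f ∈ I` monic of degree `k`. -/
abbrev Fiber (b k : ℕ) (I : Ideal ℤ[X]) : Type :=
  {J : Ideal ℤ[X] // ∃ f ∈ I, f.Monic ∧ f.natDegree = k ∧ J = lift b I f}

/-- With `M` the elements of `I` of degree less than `k`, the monic `f ∈ I` of degree `k` form a
torsor under `M`, and two of them give the same ideal exactly when they differ by an element
of `b M`. -/
lemma card_fiber {b : ℕ} (hb : 0 < b) {k : ℕ} {I : Ideal ℤ[X]}
    (hI : Nat.card (ℤ[X] ⧸ I) ≠ 0) (hm : HasMonic k I) : Nat.card (Fiber b k I) = b ^ k := by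
  obtain ⟨f, hfI, hf, hd⟩ := hm
  have hfdeg : f.degree = (k : WithBot ℕ) := by
    rw [degree_eq_natDegree hf.ne_zero, hd]
  have hadd : ∀ r : low k I, (f + r : ℤ[X]) ∈ I ∧ (f + r : ℤ[X]).Monic ∧
      (f + r : ℤ[X]).natDegree = k := by
    intro r
    obtain ⟨h1, h2⟩ := mem_low.1 r.2
    rw [← hfdeg] at h2
    refine ⟨I.add_mem hfI h1, hf.add_of_left h2, ?_⟩
    rw [natDegree_add_eq_left_of_degree_lt h2, hd]
  let ψ : low k I → Fiber b k I := fun r =>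
    ⟨lift b I (f + r), f + r, (hadd r).1, (hadd r).2.1, (hadd r).2.2, rfl⟩
  let H : AddSubgroup (low k I) := ((low k I).map (mulB b)).addSubgroupOf (low k I)
  have hψ : ∀ r s : low k I, ψ r = ψ s ↔ (QuotientAddGroup.mk r : low k I ⧸ H) =
      QuotientAddGroup.mk s := by
    intro r s
    rw [eq_comm, QuotientAddGroup.eq, AddSubgroup.mem_addSubgroupOf, Subtype.ext_iff]
    change lift b I (f + s) = lift b I (f + r) ↔ _
    rw [lift_eq_lift_iff (hadd s).2.1 (hadd r).2.1 (hadd r).1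
      ((hadd s).2.2.trans (hadd r).2.2.symm)]
    have h1 : (f + s - (f + r) : ℤ[X]) = ((-r + s : low k I) : ℤ[X]) := by
      push_cast; ring
    rw [h1]
    constructor
    · rintro ⟨t, ht, h2⟩
      refine ⟨t, ⟨ht, (mulB_mem_V_iff hb).1 ?_⟩, h2.symm⟩
      rw [mulB_apply, ← h2]
      exact (-r + s).2.2
    · rintro ⟨t, ht, h2⟩
      exact ⟨t, ht.1, h2.symm⟩
  have hsurj : Function.Surjective ψ := by
    rintro ⟨J, g, hgI, hg, hgd, rfl⟩
    refine ⟨⟨g - f, mem_low.2 ⟨I.sub_mem hgI hfI, ?_⟩⟩, ?_⟩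
    · rw [← hfdeg]
      exact degree_sub_lt_of_monic hg hf (hgd.trans hd.symm)
    · apply Subtype.ext
      simp [ψ]
  let Ψ : low k I ⧸ H → Fiber b k I := Quotient.lift ψ fun r s h => (hψ r s).2 (Quotient.sound h)
  have hΨ : Function.Bijective Ψ := by
    constructor
    · intro x y
      induction x using QuotientAddGroup.induction_on
      induction y using QuotientAddGroup.induction_on
      exact (hψ _ _).1
    · intro J
      obtain ⟨r, hr⟩ := hsurj J
      exact ⟨QuotientAddGroup.mk r, hr⟩
  rw [← Nat.card_congr (Equiv.ofBijective Ψ hΨ), ← relIndex_low hb k hI]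
  rfl

/-! ### The recursion -/

lemma HasMonic.succ {m : ℕ} {I : Ideal ℤ[X]} (h : HasMonic m I) : HasMonic (m + 1) I := by
  obtain ⟨g, hgI, hg, hgd⟩ := h
  exact ⟨X * g, I.mul_mem_left _ hgI, monic_X.mul hg, by
    rw [monic_X.natDegree_mul hg, natDegree_X, hgd, add_comm]⟩

/-- The ideals of index `n` containing a monic polynomial of degree `m`. -/
abbrev A (m n : ℕ) : Type :=
  {I : Ideal ℤ[X] // Nat.card (ℤ[X] ⧸ I) = n ∧ HasMonic m I}

/-- The sequences `(b_1, …, b_m)` of positive integers with `∏ b_i ^ i = n`; the entry `b_i` has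
index `i - 1` in `Fin m`. -/
abbrev B (m n : ℕ) : Type :=
  {b : Fin m → ℕ+ // ∏ i, (b i : ℕ) ^ ((i : ℕ) + 1) = n}

/-- The possible values of `b_{m+1}` in a factorization `n = ∏ b_i ^ i`. -/
def D (m n : ℕ) : Finset ℕ := (Finset.Icc 1 n).filter fun b => b ^ (m + 1) ∣ n

lemma mem_D {m n : ℕ} (hn : 0 < n) {b : ℕ} : b ∈ D m n ↔ 0 < b ∧ b ^ (m + 1) ∣ n := by
  simp only [D, Finset.mem_filter, Finset.mem_Icc]
  constructor
  · rintro ⟨⟨h1, -⟩, h2⟩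
    exact ⟨h1, h2⟩
  · rintro ⟨h1, h2⟩
    exact ⟨⟨h1, (Nat.le_self_pow (Nat.succ_ne_zero m) b).trans (Nat.le_of_dvd hn h2)⟩, h2⟩

lemma div_pos_of_mem_D {m n : ℕ} (hn : 0 < n) {b : ℕ} (hb : b ∈ D m n) :
    0 < n / b ^ (m + 1) :=
  Nat.div_pos (Nat.le_of_dvd hn ((mem_D hn).1 hb).2) (pow_pos ((mem_D hn).1 hb).1 _)

/-- The bijection `(b, I, b I + (f)) ↦ b I + (f)`. -/
noncomputable def sigmaEquivA (m n : ℕ) (hn : 0 < n) :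
    (Σ b : D m n, Σ I : A m (n / b.1 ^ (m + 1)), Fiber b.1 (m + 1) I.1) ≃ A (m + 1) n := by
  refine Equiv.ofBijective (fun x => ⟨x.2.2.1, ?_, ?_⟩) ⟨?_, ?_⟩
  · obtain ⟨⟨b, hb⟩, ⟨I, hI, hm⟩, ⟨J, f, hfI, hf, hd, hJ⟩⟩ := x
    subst hJ
    have h0 : Nat.card (ℤ[X] ⧸ I) ≠ 0 := by rw [hI]; exact (div_pos_of_mem_D hn hb).ne'
    change Nat.card (ℤ[X] ⧸ lift b I f) = n
    rw [card_quotient_lift ((mem_D hn).1 hb).1 h0 hf hfI hd, hI]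
    exact Nat.mul_div_cancel' ((mem_D hn).1 hb).2
  · obtain ⟨⟨b, hb⟩, ⟨I, hI, hm⟩, ⟨J, f, hfI, hf, hd, hJ⟩⟩ := x
    subst hJ
    exact ⟨f, self_mem_lift b I f, hf, hd⟩
  · rintro ⟨⟨b, hb⟩, ⟨I, hI, hm⟩, ⟨J, f, hfI, hf, hd, hJ⟩⟩
      ⟨⟨b', hb'⟩, ⟨I', hI', hm'⟩, ⟨J', f', hfI', hf', hd', hJ'⟩⟩ h
    have h1 : J = J' := congrArg Subtype.val h
    subst h1
    obtain ⟨rfl, rfl⟩ := eq_of_lift_eq ((mem_D hn).1 hb).1 hm hm' hf hfI hd hf' hfI' hd'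
      (hJ.symm.trans hJ')
    rfl
  · rintro ⟨J, hJ, f, hfJ, hf, hd⟩
    obtain ⟨b, hb, I, hm, hfI, rfl⟩ := exists_eq_lift (by rw [hJ]; exact hn.ne') hf hfJ hd
    have h0 : Nat.card (ℤ[X] ⧸ I) ≠ 0 := by
      intro h
      have h2 := AddSubgroup.relIndex_mul_index
        (show Submodule.toAddSubgroup (lift b I f) ≤ Submodule.toAddSubgroup I from lift_le hfI)
      rw [index_eq, index_eq, h, hJ] at h2
      omega
    have h1 := card_quotient_lift hb h0 hf hfI hd
    rw [hJ] at h1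
    refine ⟨⟨⟨b, (mem_D hn).2 ⟨hb, _, h1⟩⟩, ⟨I, ?_, hm⟩, ⟨lift b I f, f, hfI, hf, hd, rfl⟩⟩, rfl⟩
    exact (Nat.div_eq_of_eq_mul_right (pow_pos hb _) h1).symm

lemma prod_snoc {m : ℕ} (c : Fin m → ℕ+) (b : ℕ+) :
    ∏ i, ((Fin.snoc (α := fun _ => ℕ+) c b i : ℕ+) : ℕ) ^ ((i : ℕ) + 1) =
      (∏ i, (c i : ℕ) ^ ((i : ℕ) + 1)) * (b : ℕ) ^ (m + 1) := by
  simp [Fin.prod_univ_castSucc]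

/-- Appending `b = b_{m+1}` to `(b_1, …, b_m)`. -/
noncomputable def sigmaEquivB (m n : ℕ) (hn : 0 < n) :
    (Σ b : D m n, B m (n / b.1 ^ (m + 1))) ≃ B (m + 1) n := by
  refine Equiv.ofBijective (fun x =>
    ⟨Fin.snoc (α := fun _ => ℕ+) x.2.1 ⟨x.1.1, ((mem_D hn).1 x.1.2).1⟩, ?_⟩) ⟨?_, ?_⟩
  · obtain ⟨⟨b, hb⟩, ⟨c, hc⟩⟩ := x
    refine (prod_snoc c _).trans ?_
    rw [hc]
    exact Nat.div_mul_cancel ((mem_D hn).1 hb).2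
  · rintro ⟨⟨b, hb⟩, ⟨c, hc⟩⟩ ⟨⟨b', hb'⟩, ⟨c', hc'⟩⟩ h
    have h1 := congrArg Subtype.val h
    dsimp only at h1
    obtain ⟨rfl, h3⟩ := Fin.snoc_injective2 h1
    obtain rfl : b = b' := congrArg PNat.val h3
    rfl
  · rintro ⟨c, hc⟩
    rw [Fin.prod_univ_castSucc] at hc
    simp only [Fin.val_castSucc, Fin.val_last] at hc
    have hpos : 0 < (c (Fin.last m) : ℕ) := (c (Fin.last m)).pos
    refine ⟨⟨⟨c (Fin.last m), (mem_D hn).2 ⟨hpos, _, hc.symm.trans (mul_comm _ _)⟩⟩,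
      ⟨fun i => c i.castSucc, ?_⟩⟩, ?_⟩
    · exact (Nat.div_eq_of_eq_mul_left (pow_pos hpos _) hc.symm).symm
    · apply Subtype.ext
      exact Fin.snoc_init_self c

lemma hasMonic_zero {I : Ideal ℤ[X]} : HasMonic 0 I ↔ I = ⊤ := by
  constructor
  · rintro ⟨f, hfI, hf, hd⟩
    rw [hf.natDegree_eq_zero.1 hd] at hfI
    exact (Ideal.eq_top_iff_one I).2 hfI
  · rintro rfl
    exact ⟨1, trivial, monic_one, natDegree_one⟩

/-- Both sides satisfy the recursion on `m` given by splitting off `b_{m+1}`. -/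
lemma card_A (m : ℕ) : ∀ n : ℕ, 0 < n →
    Finite (A m n) ∧ Finite (B m n) ∧ Nat.card (A m n) = n * Nat.card (B m n) := by
  induction m with
  | zero =>
    intro n hn
    have hA : Subsingleton (A 0 n) := ⟨fun x y => Subtype.ext
      ((hasMonic_zero.1 x.2.2).trans (hasMonic_zero.1 y.2.2).symm)⟩
    refine ⟨inferInstance, inferInstance, ?_⟩
    have htop : Nat.card (ℤ[X] ⧸ (⊤ : Ideal ℤ[X])) = 1 := Nat.card_unique
    by_cases h1 : n = 1
    · subst h1
      have : Nonempty (A 0 1) := ⟨⟨⊤, htop, hasMonic_zero.2 rfl⟩⟩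
      have : Nonempty (B 0 1) := ⟨⟨fun _ => 1, by simp⟩⟩
      rw [Nat.card_unique, Nat.card_unique]
    · have : IsEmpty (A 0 n) := ⟨by
        rintro ⟨I, hI, hm⟩
        rw [hasMonic_zero.1 hm, htop] at hI
        exact h1 hI.symm⟩
      have : IsEmpty (B 0 n) := ⟨by
        rintro ⟨b, hb⟩
        simp at hb
        exact h1 hb.symm⟩
      simp
  | succ m ih =>
    intro n hn
    have hfib : ∀ (b : D m n) (I : A m (n / b.1 ^ (m + 1))),
        Nat.card (Fiber b.1 (m + 1) I.1) = b.1 ^ (m + 1) := by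
      intro b I
      refine card_fiber ((mem_D hn).1 b.2).1 ?_ I.2.2.succ
      rw [I.2.1]
      exact (div_pos_of_mem_D hn b.2).ne'
    have hfin : ∀ (b : D m n) (I : A m (n / b.1 ^ (m + 1))), Finite (Fiber b.1 (m + 1) I.1) := by
      intro b I
      refine Nat.finite_of_card_ne_zero ?_
      rw [hfib]
      exact (pow_pos ((mem_D hn).1 b.2).1 _).ne'
    have ih' := fun b : D m n => ih _ (div_pos_of_mem_D hn b.2)
    have hA := fun b : D m n => (ih' b).1
    have hB := fun b : D m n => (ih' b).2.1
    refine ⟨Finite.of_equiv _ (sigmaEquivA m n hn), Finite.of_equiv _ (sigmaEquivB m n hn), ?_⟩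
    rw [← Nat.card_congr (sigmaEquivA m n hn), ← Nat.card_congr (sigmaEquivB m n hn),
      Nat.card_sigma, Nat.card_sigma, Finset.mul_sum]
    refine Finset.sum_congr rfl fun b _ => ?_
    have := Fintype.ofFinite (A m (n / b.1 ^ (m + 1)))
    rw [Nat.card_sigma, Finset.sum_congr rfl fun I _ => hfib b I, Finset.sum_const,
      Finset.card_univ, ← Nat.card_eq_fintype_card, smul_eq_mul, (ih' b).2.2]
    calc n / b.1 ^ (m + 1) * Nat.card (B m (n / b.1 ^ (m + 1))) * b.1 ^ (m + 1)
        = (n / b.1 ^ (m + 1) * b.1 ^ (m + 1)) * Nat.card (B m (n / b.1 ^ (m + 1))) := by ring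
      _ = _ := by rw [Nat.div_mul_cancel ((mem_D hn).1 b.2).2]

/-! ### Removing the degree bound -/

/-- Two of the `n + 1` powers `1, X, …, X ^ n` agree modulo an ideal of index `n`; a multiple of
their difference is monic of degree `n`. -/
lemma hasMonic_of_card {n : ℕ} (hn : 0 < n) {I : Ideal ℤ[X]} (hI : Nat.card (ℤ[X] ⧸ I) = n) :
    HasMonic n I := by
  have : Finite (ℤ[X] ⧸ I) := Nat.finite_of_card_ne_zero (by omega)
  have := Fintype.ofFinite (ℤ[X] ⧸ I)
  rw [Nat.card_eq_fintype_card] at hI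
  obtain ⟨i, j, hij, h⟩ := Fintype.exists_ne_map_eq_of_card_lt
    (fun i : Fin (n + 1) => Ideal.Quotient.mk I (X ^ (i : ℕ))) (by simp [hI])
  wlog hlt : i < j generalizing i j
  · exact this j i hij.symm h.symm (lt_of_le_of_ne (not_lt.1 hlt) hij.symm)
  have hlt' : (i : ℕ) < j := hlt
  have hmem : (X ^ (j : ℕ) - X ^ (i : ℕ) : ℤ[X]) ∈ I := Ideal.Quotient.eq.1 h.symm
  have hdeg : (X ^ (i : ℕ) : ℤ[X]).degree < (X ^ (j : ℕ) : ℤ[X]).degree := by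
    rw [degree_X_pow, degree_X_pow]
    exact_mod_cast hlt'
  have hmon : (X ^ (j : ℕ) - X ^ (i : ℕ) : ℤ[X]).Monic := (monic_X_pow _).sub_of_left hdeg
  have hnd : (X ^ (j : ℕ) - X ^ (i : ℕ) : ℤ[X]).natDegree = j := by
    rw [natDegree_sub_eq_left_of_natDegree_lt (by simpa using hlt'), natDegree_X_pow]
  refine ⟨X ^ (n - (j : ℕ)) * (X ^ (j : ℕ) - X ^ (i : ℕ)), I.mul_mem_left _ hmem,
    (monic_X_pow _).mul hmon, ?_⟩
  rw [(monic_X_pow _).natDegree_mul hmon, natDegree_X_pow, hnd]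
  omega

/-- A sequence with `∏ b_i ^ i = n` has `b_i = 1` for `i > n`, since `b_i ≥ 2` would give
`n ≥ 2 ^ i > i`. -/
lemma eq_one_of_lt {n : ℕ} (hn : 0 < n) {b : ℕ+ → ℕ+} (hfin : {i | b i ≠ 1}.Finite)
    (hb : ∏ᶠ i : ℕ+, (b i : ℕ) ^ (i : ℕ) = n) {i : ℕ+} (hi : n < i) : b i = 1 := by
  by_contra hne
  have hsub : Function.mulSupport (fun i : ℕ+ => (b i : ℕ) ^ (i : ℕ)) ⊆ hfin.toFinset := by
    intro j hj
    rw [Function.mem_mulSupport] at hj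
    simp only [Set.Finite.coe_toFinset, Set.mem_ofPred_eq]
    intro h
    simp [h] at hj
  rw [finprod_eq_prod_of_mulSupport_subset _ hsub] at hb
  have hdvd : (b i : ℕ) ^ (i : ℕ) ∣ n := by
    rw [← hb]
    exact Finset.dvd_prod_of_mem (fun i : ℕ+ => (b i : ℕ) ^ (i : ℕ)) (by simpa using hne)
  have h2 : 2 ≤ (b i : ℕ) := by
    have h3 : (b i : ℕ) ≠ 1 := fun h => hne (PNat.coe_eq_one_iff.1 h)
    have := (b i).pos
    omega
  have h4 := Nat.le_of_dvd hn hdvd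
  have h5 := Nat.pow_le_pow_left h2 (i : ℕ)
  have h6 := Nat.lt_two_pow_self (n := (i : ℕ))
  omega

lemma finprod_eq {n : ℕ} {b : ℕ+ → ℕ+} (hb : ∀ i : ℕ+, n < i → b i = 1) :
    ∏ᶠ i : ℕ+, (b i : ℕ) ^ (i : ℕ) =
      ∏ i : Fin n, (b i.1.succPNat : ℕ) ^ ((i : ℕ) + 1) := by
  let e : Fin n ↪ ℕ+ := ⟨fun i => i.1.succPNat, fun i j h =>
    Fin.ext (Nat.succPNat_injective h)⟩
  rw [finprod_eq_prod_of_mulSupport_subset (s := Finset.univ.map e), Finset.prod_map]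
  · rfl
  · intro i hi
    rw [Function.mem_mulSupport] at hi
    have hle : (i : ℕ) ≤ n := by
      by_contra h
      exact hi (by simp [hb i (not_le.1 h)])
    have := i.pos
    simp only [Finset.coe_map, Finset.coe_univ, Set.image_univ, Set.mem_range]
    exact ⟨⟨i.natPred, by rw [PNat.natPred]; omega⟩, PNat.succPNat_natPred i⟩

/-- Truncating a sequence with `∏ b_i ^ i = n` to its first `n` terms loses nothing. -/
noncomputable def seqEquiv (n : ℕ) (hn : 0 < n) :
    {b : ℕ+ → ℕ+ // {i | b i ≠ 1}.Finite ∧ ∏ᶠ i : ℕ+, (b i : ℕ) ^ (i : ℕ) = n} ≃ B n n := by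
  refine Equiv.ofBijective (fun b => ⟨fun i => b.1 i.1.succPNat, ?_⟩) ⟨?_, ?_⟩
  · rw [← finprod_eq fun i hi => eq_one_of_lt hn b.2.1 b.2.2 hi]
    exact b.2.2
  · rintro ⟨b, hb, hb'⟩ ⟨c, hc, hc'⟩ h
    apply Subtype.ext
    ext1 i
    change b i = c i
    by_cases hi : n < i
    · rw [eq_one_of_lt hn hb hb' hi, eq_one_of_lt hn hc hc' hi]
    · have h1 := congrFun (congrArg Subtype.val h)
        ⟨i.natPred, by have := i.pos; rw [PNat.natPred]; omega⟩
      simpa only [PNat.succPNat_natPred] using h1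
  · rintro ⟨c, hc⟩
    let b : ℕ+ → ℕ+ := fun i => if h : i.natPred < n then c ⟨i.natPred, h⟩ else 1
    have hb1 : ∀ i : ℕ+, n < i → b i = 1 := by
      intro i hi
      exact dif_neg (by rw [PNat.natPred]; omega)
    have hbc : ∀ i : Fin n, b i.1.succPNat = c i := by
      intro i
      simp [b]
    refine ⟨⟨b, ?_, ?_⟩, Subtype.ext (funext hbc)⟩
    · refine (Set.finite_Iic (⟨n, hn⟩ : ℕ+)).subset fun i hi => ?_
      by_contra h
      exact hi (hb1 i (not_le.1 h))
    · rw [finprod_eq hb1]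
      simpa only [hbc] using hc

end CardIdeals

/-- Coefficient form of `ζ(ℤ[X], s) = ∏_{i=1}^∞ ζ(i(s-1))`: the number of ideals of `ℤ[X]`
of index `n` equals `n` times the number of finitely supported sequences `(b_i)_{i≥1}` of
positive integers with `∏_i b_i^i = n`. -/
theorem card_ideals_polynomial_int (n : ℕ) (hn : 0 < n) :
    Nat.card {I : Ideal (Polynomial ℤ) // Nat.card (Polynomial ℤ ⧸ I) = n} =
      n * Nat.card {b : ℕ+ → ℕ+ //
        {i | b i ≠ 1}.Finite ∧ ∏ᶠ i : ℕ+, (b i : ℕ) ^ (i : ℕ) = n} := by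
  rw [Nat.card_congr (CardIdeals.seqEquiv n hn), ← (CardIdeals.card_A n n hn).2.2]
  exact Nat.card_congr (Equiv.subtypeEquivRight fun I =>
    ⟨fun h => ⟨h, CardIdeals.hasMonic_of_card hn h⟩, fun h => h.1⟩)
end

section
/- Fix d ≥ 3. Let c_n^{(d)} be the number of subgroups Λ ⊆ ℤ^d of index n such that Λ = ρ_f(I) for some monic polynomial f ∈ ℤ[X] of degree d and some ideal I ⊆ ℤ[X]/(f), where ρ_f is the coordinate isomorphism ℤ[X]/(f) → ℤ^d with respect to the basis 1, X, …, X^{d-1}, and let m_n^{(d)} be the number of all subgroups of ℤ^d of index n. Then the proportion of ideal lattices among all finite-index subgroups tends to zero: lim_{N→∞} (Σ_{n≤N} c_n^{(d)}) / (Σ_{n≤N} m_n^{(d)}) = 0. -/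
/-!
The proof compares two counts of lattices of index at most `N`: there are at least
`(N / 2) ^ d` lattices in all (`sum_card_index_ge`), but at most `N ^ (d - 1 / 6)` ideal lattices.

The lower bound comes from the kernels of the `n ^ (d - 1)` homomorphisms
`v ↦ v₀ + c₁ v₁ + ⋯ + c_{d-1} v_{d-1}` to `ℤ/n`, all of index `n` and pairwise distinct.

For the upper bound, the only property of an ideal lattice that is used is `ShiftClosed`:
if `v ∈ Λ` is a polynomial and `X v` still has degree less than `d`, then `X v ∈ Λ`. It passes to
`Λ ∩ ℤ^e` for `e ≤ d`. A lattice `Λ ⊆ ℤ^(e+1)` is determined by `M = Λ ∩ ℤ^e`, the generator `a` of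
its last coordinates and a class in `ℤ^e / M`, and has index `[ℤ^e : M] a`; hence at most `N` lattices
of index at most `N` lie over each `M` (`extension_count`), and it remains to show that rank three
has at most `N ^ (3 - 1 / 6)` shift-closed lattices (`count_rank_three`).

In rank three, let `(a₀, 0, 0)`, `(t, a₁, 0)`, `(u, v, a₂)` be the Hermite basis. Shifting the first
two rows gives `a₂ ∣ a₁ ∣ a₀` and `a₁ ∣ t`, so `a₁ = c a₂`, `a₀ = k a₁`, `t = a₁ s`, and the index is
`k c² a₂³`. The shift of the second row also fixes `c u` modulo `a₀` once `s` and `v` are known, so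
`(s, v, u)` has at most `k · a₁ · c ≤ N` values, while `(k, c, a₂)` has at most
`N · N ^ (1 / 2) · N ^ (1 / 3)`.
-/

open Polynomial Filter Topology

/-! ### Shift-closed lattices -/

/-- The polynomial of degree less than `d` with coefficient vector `v`. -/
noncomputable def toPoly {d : ℕ} (v : Fin d → ℤ) : ℤ[X] :=
  ∑ i : Fin d, C (v i) * X ^ (i : ℕ)

/-- `Λ` is stable under multiplication by `X`, as long as the product still has degree less
than `d`. No modulus `f` enters, which is why the condition survives intersecting `Λ` with
the vectors of smaller degree. -/
def ShiftClosed (d : ℕ) (Λ : AddSubgroup (Fin d → ℤ)) : Prop :=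
  ∀ v w : Fin d → ℤ, v ∈ Λ → toPoly w = X * toPoly v → w ∈ Λ

lemma IsIdealLattice.shiftClosed {d : ℕ} {Λ : AddSubgroup (Fin d → ℤ)}
    (h : IsIdealLattice d Λ) : ShiftClosed d Λ := by
  obtain ⟨f, -, -, I, hI⟩ := h
  intro v w hv hw
  rw [hI] at hv ⊢
  change Ideal.Quotient.mk _ (toPoly w) ∈ I
  rw [hw, map_mul]
  exact I.mul_mem_left _ hv

/-! ### Lattices as extensions -/

/-- The inclusion `ℤ^d → ℤ^(d+1)` onto the vectors with last coordinate zero. -/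
def snocZero (d : ℕ) : (Fin d → ℤ) →+ (Fin (d + 1) → ℤ) where
  toFun v := Fin.snoc (α := fun _ => ℤ) v 0
  map_zero' := by
    ext i
    refine Fin.lastCases ?_ (fun j => ?_) i <;> simp
  map_add' v w := by
    ext i
    refine Fin.lastCases ?_ (fun j => ?_) i <;> simp

@[simp] lemma snocZero_castSucc (d : ℕ) (v : Fin d → ℤ) (i : Fin d) :
    snocZero d v i.castSucc = v i := by
  simp [snocZero]

@[simp] lemma snocZero_last (d : ℕ) (v : Fin d → ℤ) :
    snocZero d v (Fin.last d) = 0 := by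
  simp [snocZero]

lemma eq_snocZero {d : ℕ} {v : Fin (d + 1) → ℤ} (h : v (Fin.last d) = 0) :
    snocZero d (fun i => v i.castSucc) = v := by
  ext i
  refine Fin.lastCases ?_ (fun j => ?_) i
  · simp [h]
  · simp

lemma toPoly_snocZero (d : ℕ) (v : Fin d → ℤ) : toPoly (snocZero d v) = toPoly v := by
  simp [toPoly, Fin.sum_univ_castSucc]

lemma ShiftClosed.comap {d : ℕ} {Λ : AddSubgroup (Fin (d + 1) → ℤ)}
    (h : ShiftClosed (d + 1) Λ) : ShiftClosed d (Λ.comap (snocZero d)) := by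
  intro v w hv hw
  exact h _ _ hv (by rw [toPoly_snocZero, toPoly_snocZero, hw])

/-- One step of the Hermite normal form: a finite-index `Λ ⊆ ℤ^(d+1)` is an extension of the
ideal `aℤ` of its last coordinates by `Λ ∩ ℤ^d`. -/
lemma exists_layer {d : ℕ} (Λ : AddSubgroup (Fin (d + 1) → ℤ)) (h : Λ.index ≠ 0) :
    ∃ a : ℕ, 0 < a ∧ Λ.index = (Λ.comap (snocZero d)).index * a ∧
      (∀ v ∈ Λ, (a : ℤ) ∣ v (Fin.last d)) ∧ ∃ g ∈ Λ, g (Fin.last d) = a := by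
  set π : (Fin (d + 1) → ℤ) →+ ℤ := Pi.evalAddMonoidHom _ (Fin.last d) with hπ
  have hsurj : Function.Surjective π := fun x => ⟨fun _ => x, rfl⟩
  have hker : (snocZero d).range = π.ker := by
    ext v
    constructor
    · rintro ⟨w, rfl⟩
      exact snocZero_last d w
    · intro hv
      exact ⟨_, eq_snocZero hv⟩
  have hidx : Λ.index = (Λ.comap (snocZero d)).index * (Λ.map π).index := by
    rw [AddSubgroup.index_map, AddMonoidHom.range_eq_top.2 hsurj, AddSubgroup.index_top, mul_one,
      AddSubgroup.index_comap, hker, ← AddSubgroup.relIndex_sup_left,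
      AddSubgroup.relIndex_mul_index le_sup_left]
  obtain ⟨b, hb⟩ := Int.subgroup_cyclic (Λ.map π)
  rw [← AddSubgroup.zmultiples_eq_closure] at hb
  have hb' : Λ.map π = AddSubgroup.zmultiples (b.natAbs : ℤ) := by
    rw [hb, Int.zmultiples_natAbs]
  have hidx2 : (Λ.map π).index = b.natAbs := by rw [hb, Int.index_zmultiples]
  refine ⟨b.natAbs, ?_, ?_, ?_, ?_⟩
  · rw [hidx, hidx2] at h
    exact Nat.pos_of_ne_zero (right_ne_zero_of_mul h)
  · rw [hidx, hidx2]
  · intro v hv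
    have : π v ∈ Λ.map π := AddSubgroup.mem_map_of_mem _ hv
    rw [hb', Int.mem_zmultiples_iff] at this
    exact this
  · have : (b.natAbs : ℤ) ∈ Λ.map π := by
      rw [hb']
      exact AddSubgroup.mem_zmultiples _
    exact this

lemma le_of_layer {d : ℕ} {Λ Λ' : AddSubgroup (Fin (d + 1) → ℤ)} {a : ℤ}
    (hM : Λ.comap (snocZero d) = Λ'.comap (snocZero d))
    (ha : ∀ v ∈ Λ, a ∣ v (Fin.last d)) {g g' : Fin (d + 1) → ℤ} (hg : g ∈ Λ) (hg' : g' ∈ Λ')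
    (hga : g (Fin.last d) = a) (hgg : g - g' ∈ Λ') : Λ ≤ Λ' := by
  intro v hv
  obtain ⟨k, hk⟩ := ha v hv
  have h1 : v - k • g ∈ Λ := Λ.sub_mem hv (Λ.zsmul_mem hg k)
  have h2 : (v - k • g) (Fin.last d) = 0 := by simp [hk, hga, mul_comm]
  have h3 : (fun i => (v - k • g) (Fin.castSucc i)) ∈ Λ.comap (snocZero d) := by
    rw [AddSubgroup.mem_comap, eq_snocZero h2]
    exact h1
  rw [hM, AddSubgroup.mem_comap, eq_snocZero h2] at h3
  have : v = (v - k • g) + k • (g - g') + k • g' := by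
    rw [smul_sub]
    abel
  rw [this]
  exact Λ'.add_mem (Λ'.add_mem h3 (Λ'.zsmul_mem hgg k)) (Λ'.zsmul_mem hg' k)

/-! ### Counting extensions -/

/-- Counting through a relation `R` that assigns codes and separates points. -/
lemma finite_ncard_le_of_code {α β : Type*} {S : Set α} {T : Set β} (R : α → β → Prop)
    (hT : T.Finite) (h1 : ∀ x ∈ S, ∃ c ∈ T, R x c)
    (h2 : ∀ x y c, R x c → R y c → x = y) : S.Finite ∧ S.ncard ≤ T.ncard := by
  rcases S.eq_empty_or_nonempty with rfl | ⟨x₀, hx₀⟩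
  · simp
  have : Nonempty β := ⟨(h1 x₀ hx₀).choose⟩
  choose! f hf hR using h1
  have hinj : Set.InjOn f S := by
    intro x hx y hy hxy
    exact h2 x y (f x) (hR x hx) (hxy ▸ hR y hy)
  exact ⟨Set.Finite.of_injOn hf hinj hT, Set.ncard_le_ncard_of_injOn f hf hinj hT⟩

/-- The classes modulo a finite-index subgroup are numbered by the integers below its index. -/
lemma exists_numbering {G : Type*} [AddCommGroup G] (M : AddSubgroup G) :
    ∃ e : G → ℕ, M.index ≠ 0 →
      (∀ g, e g < M.index) ∧ ∀ g g', e g = e g' → g - g' ∈ M := by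
  by_cases h : M.index = 0
  · exact ⟨fun _ => 0, fun h' => absurd h h'⟩
  have : Finite (G ⧸ M) := Nat.finite_of_card_ne_zero h
  let E := Finite.equivFin (G ⧸ M)
  refine ⟨fun g => E (g : G ⧸ M), fun _ => ⟨fun g => (E _).2, fun g g' hgg => ?_⟩⟩
  have := E.injective (Fin.ext hgg)
  rw [QuotientAddGroup.eq_iff_sub_mem] at this
  exact this

/-- Passing from rank `d` to rank `d + 1` multiplies the number of lattices by at most `N`:
over `M = Λ ∩ ℤ^d` of index `m` lie at most `m` lattices for each `a ≤ N / m`. -/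
lemma extension_count {d N : ℕ} {S : Set (AddSubgroup (Fin (d + 1) → ℤ))}
    {T : Set (AddSubgroup (Fin d → ℤ))} (hT : T.Finite)
    (hS : ∀ Λ ∈ S, Λ.index ≠ 0 ∧ Λ.index ≤ N)
    (hST : ∀ Λ ∈ S, Λ.comap (snocZero d) ∈ T) :
    S.Finite ∧ S.ncard ≤ T.ncard * N := by
  choose e he using fun M : AddSubgroup (Fin d → ℤ) => exists_numbering M
  have hcard : (T ×ˢ (Finset.range N : Set ℕ)).ncard = T.ncard * N := by
    rw [Set.ncard_prod, Set.ncard_coe_finset, Finset.card_range]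
  rw [← hcard]
  -- the pair `(a, class of g)` is written as the single number `(a - 1) m + e(g) < a m ≤ N`
  refine finite_ncard_le_of_code (fun Λ c => c.1 = Λ.comap (snocZero d) ∧ c.1.index ≠ 0 ∧
    ∃ b : ℕ, ∃ g ∈ Λ, g (Fin.last d) = ((b + 1 : ℕ) : ℤ) ∧
      (∀ v ∈ Λ, ((b + 1 : ℕ) : ℤ) ∣ v (Fin.last d)) ∧
      c.2 = b * c.1.index + e c.1 (fun i => g i.castSucc)) (hT.prod (Finset.finite_toSet _)) ?_ ?_
  · intro Λ hΛ
    obtain ⟨h0, hN⟩ := hS Λ hΛ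
    obtain ⟨a, ha, hidx, hdvd, g, hg, hga⟩ := exists_layer Λ h0
    obtain ⟨b, rfl⟩ : ∃ b, a = b + 1 := ⟨a - 1, by omega⟩
    have hM : (Λ.comap (snocZero d)).index ≠ 0 := left_ne_zero_of_mul (hidx ▸ h0)
    have hlt := (he _ hM).1 (fun i => g i.castSucc)
    refine ⟨(Λ.comap (snocZero d), b * (Λ.comap (snocZero d)).index +
      e (Λ.comap (snocZero d)) (fun i => g i.castSucc)), ⟨hST Λ hΛ, ?_⟩, rfl, hM, b, g, hg, hga,
      hdvd, rfl⟩
    simp only [Finset.coe_range, Set.mem_Iio]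
    rw [hidx] at hN
    nlinarith
  · rintro Λ Λ' ⟨M, j⟩ ⟨h1, h0, b, g, hg, hga, hdvd, hj⟩ ⟨h1', -, b', g', hg', hga', hdvd', hj'⟩
    dsimp only at *
    have hlt := (he M h0).1 (fun i => g i.castSucc)
    have hlt' := (he M h0).1 (fun i => g' i.castSucc)
    have hpos : 0 < M.index := Nat.pos_of_ne_zero h0
    have hb : j / M.index = b := by
      rw [hj, mul_comm, Nat.mul_add_div hpos, Nat.div_eq_of_lt hlt, add_zero]
    have hb' : j / M.index = b' := by
      rw [hj', mul_comm, Nat.mul_add_div hpos, Nat.div_eq_of_lt hlt', add_zero]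
    obtain rfl : b = b' := hb.symm.trans hb'
    have hee := (he M h0).2 _ _ (by omega : e M (fun i => g i.castSucc) =
      e M (fun i => g' i.castSucc))
    have hsub : snocZero d ((fun i => g i.castSucc) - fun i => g' i.castSucc) = g - g' := by
      rw [← eq_snocZero (v := g - g') (by simp [hga, hga'])]
      rfl
    have hm : g - g' ∈ Λ := by
      rw [h1, AddSubgroup.mem_comap, hsub] at hee
      exact hee
    have hm' : g - g' ∈ Λ' := by
      rw [h1', AddSubgroup.mem_comap, hsub] at hee
      exact hee
    refine le_antisymm (le_of_layer (h1.symm.trans h1') hdvd hg hg' hga hm')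
      (le_of_layer (h1'.symm.trans h1) hdvd' hg' hg hga' ?_)
    rw [← neg_sub]
    exact Λ.neg_mem hm

lemma finite_index_le (d N : ℕ) :
    {Λ : AddSubgroup (Fin d → ℤ) | Λ.index ≠ 0 ∧ Λ.index ≤ N}.Finite := by
  induction d with
  | zero =>
    have : Finite (AddSubgroup (Fin 0 → ℤ)) := Finite.of_injective _ SetLike.coe_injective
    exact Set.toFinite _
  | succ d ih =>
    refine (extension_count (N := N) ih (fun Λ h => h) ?_).1
    rintro Λ ⟨h0, hN⟩
    obtain ⟨a, ha, hidx, -⟩ := exists_layer Λ h0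
    rw [hidx] at h0 hN
    exact ⟨left_ne_zero_of_mul h0, (Nat.le_mul_of_pos_right _ ha).trans hN⟩

/-! ### Shift-closed lattices of rank three -/

/-- The rank-three Hermite normal form of a shift-closed lattice: the rows are
`(a₀, 0, 0)`, `(a₁ s, a₁, 0)` and `(u, v, a₂)` with `a₂ = a`, `a₁ = c a` and `a₀ = k a₁`. Given
the other parameters, the two equations with `c₁`, which express `X · (a₁ s, a₁, 0) ∈ Λ`, leave at
most `c` values of `u ∈ [0, a₀)`, told apart by `w = ⌊c u / a₀⌋`. -/
def HermiteCode (Λ : AddSubgroup (Fin 3 → ℤ)) (k c a s v w : ℕ) : Prop :=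
  0 < k ∧ 0 < c ∧ 0 < a ∧ ∃ u c₀ c₁ : ℤ,
    ![(k * c * a : ℤ), 0, 0] ∈ Λ ∧ (∀ x, ![x, 0, 0] ∈ Λ → (k * c * a : ℤ) ∣ x) ∧
    ![(c * a * s : ℤ), c * a, 0] ∈ Λ ∧ (∀ x y, ![x, y, 0] ∈ Λ → (c * a : ℤ) ∣ y) ∧
    ![u, (v : ℤ), a] ∈ Λ ∧ (∀ x y z, ![x, y, z] ∈ Λ → (a : ℤ) ∣ z) ∧
    (c * a * s - c * v : ℤ) = c * a * c₁ ∧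
    (c * u + c₁ * (c * a * s) : ℤ) = k * c * a * c₀ ∧
    (w : ℤ) = c * u / (k * c * a)

lemma HermiteCode.le {Λ Λ' : AddSubgroup (Fin 3 → ℤ)} {k c a s v w : ℕ}
    (h : HermiteCode Λ k c a s v w) (h' : HermiteCode Λ' k c a s v w) : Λ ≤ Λ' := by
  obtain ⟨hk, hc, ha, u, c₀, c₁, m0, d0, m1, d1, m2, d2, e1, e0, hw⟩ := h
  obtain ⟨-, -, -, u', c₀', c₁', rowZero', -, rowOne', -, rowTwo', -, eqOne', eqZero', hw'⟩ := h'
  have hkz : (0 : ℤ) < k := by exact_mod_cast hk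
  have hcz : (0 : ℤ) < c := by exact_mod_cast hc
  have haz : (0 : ℤ) < a := by exact_mod_cast ha
  have hca : (0 : ℤ) < c * a := by positivity
  have hkca : (0 : ℤ) < k * c * a := by positivity
  obtain rfl : c₁ = c₁' := mul_left_cancel₀ hca.ne' (e1.symm.trans eqOne')
  -- the two values of `c u` are congruent modulo `a₀` and have the same quotient by `a₀`
  have hmod : (c * u : ℤ) % (k * c * a) = (c * u' : ℤ) % (k * c * a) := by
    refine Int.ModEq.symm (Int.modEq_iff_dvd.2 ⟨c₀ - c₀', ?_⟩)
    linear_combination e0 - eqZero'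
  have hcu : (c * u : ℤ) = c * u' := by
    rw [← Int.mul_ediv_add_emod (c * u) (k * c * a), ← Int.mul_ediv_add_emod (c * u') (k * c * a),
      hmod, ← hw, ← hw']
  obtain rfl : u = u' := mul_left_cancel₀ hcz.ne' hcu
  intro q hq
  obtain ⟨x, y, z, rfl⟩ : ∃ x y z, q = ![x, y, z] :=
    ⟨q 0, q 1, q 2, by ext i; fin_cases i <;> rfl⟩
  obtain ⟨n, hn⟩ := d2 _ _ _ hq
  have hq1 : ![x - n * u, y - n * v, 0] ∈ Λ := by
    have := Λ.sub_mem hq (Λ.zsmul_mem m2 n)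
    convert this using 1
    ext i
    fin_cases i
    · simp
    · simp
    · simp [hn, mul_comm]
  obtain ⟨j, hj⟩ := d1 _ _ hq1
  have hq2 : ![x - n * u - j * (c * a * s), 0, 0] ∈ Λ := by
    have := Λ.sub_mem hq1 (Λ.zsmul_mem m1 j)
    convert this using 1
    ext i
    fin_cases i
    · simp
    · simp [hj, mul_comm]
    · simp
  obtain ⟨i, hi⟩ := d0 _ hq2
  have := Λ'.add_mem (Λ'.add_mem (Λ'.zsmul_mem rowZero' i) (Λ'.zsmul_mem rowOne' j))
    (Λ'.zsmul_mem rowTwo' n)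
  convert this using 1
  ext l
  fin_cases l
  · simp
    linear_combination hi
  · simp
    linear_combination hj
  · simp
    linear_combination hn

/-- The triangular shape of a finite-index lattice of rank three, before using shifts. -/
lemma exists_triangular (Λ : AddSubgroup (Fin 3 → ℤ)) (h : Λ.index ≠ 0) :
    ∃ a₀ a₁ a₂ : ℕ, 0 < a₀ ∧ 0 < a₁ ∧ 0 < a₂ ∧ Λ.index = a₀ * a₁ * a₂ ∧ ∃ t u v : ℤ,
      ![(a₀ : ℤ), 0, 0] ∈ Λ ∧ (∀ x, ![x, 0, 0] ∈ Λ → (a₀ : ℤ) ∣ x) ∧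
      ![t, (a₁ : ℤ), 0] ∈ Λ ∧ (∀ x y, ![x, y, 0] ∈ Λ → (a₁ : ℤ) ∣ y) ∧
      ![u, v, (a₂ : ℤ)] ∈ Λ ∧ (∀ x y z, ![x, y, z] ∈ Λ → (a₂ : ℤ) ∣ z) := by
  have s1 : ∀ x : ℤ, snocZero 1 ![x] = ![x, 0] := fun x => by
    ext i; fin_cases i <;> rfl
  have s2 : ∀ x y : ℤ, snocZero 2 ![x, y] = ![x, y, 0] := fun x y => by
    ext i; fin_cases i <;> rfl
  obtain ⟨a₂, p2, i2, d2, g2, m2, l2⟩ := exists_layer Λ h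
  have h2 := left_ne_zero_of_mul (i2 ▸ h)
  obtain ⟨a₁, p1, i1, d1, g1, m1, l1⟩ := exists_layer (Λ.comap (snocZero 2)) h2
  have h1 := left_ne_zero_of_mul (i1 ▸ h2)
  obtain ⟨a₀, p0, i0, d0, g0, m0, l0⟩ :=
    exists_layer ((Λ.comap (snocZero 2)).comap (snocZero 1)) h1
  have hone : (((Λ.comap (snocZero 2)).comap (snocZero 1)).comap (snocZero 0)).index = 1 := by
    rw [AddSubgroup.index_eq_one]
    exact Subsingleton.elim _ _
  have e0 : g0 = ![(a₀ : ℤ)] := by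
    ext i; fin_cases i; exact l0
  have e1 : g1 = ![g1 0, (a₁ : ℤ)] := by
    ext i
    fin_cases i
    · rfl
    · exact l1
  have e2 : g2 = ![g2 0, g2 1, (a₂ : ℤ)] := by
    ext i
    fin_cases i
    · rfl
    · rfl
    · exact l2
  refine ⟨a₀, a₁, a₂, p0, p1, p2, ?_, g1 0, g2 0, g2 1, ?_, ?_, ?_, ?_, ?_, ?_⟩
  · rw [i2, i1, i0, hone, one_mul]
  · rw [e0, AddSubgroup.mem_comap, AddSubgroup.mem_comap, s1, s2] at m0
    exact m0
  · intro x hx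
    exact d0 ![x] (by rw [AddSubgroup.mem_comap, AddSubgroup.mem_comap, s1, s2]; exact hx)
  · rw [e1, AddSubgroup.mem_comap, s2] at m1
    exact m1
  · intro x y hx
    exact d1 ![x, y] (by rw [AddSubgroup.mem_comap, s2]; exact hx)
  · rw [← e2]
    exact m2
  · intro x y z hx
    exact d2 _ hx

lemma exists_hermiteCode {Λ : AddSubgroup (Fin 3 → ℤ)} (h : Λ.index ≠ 0)
    (hs : ShiftClosed 3 Λ) : ∃ k c a s v w : ℕ, HermiteCode Λ k c a s v w ∧
      Λ.index = k * c ^ 2 * a ^ 3 ∧ s < k ∧ v < c * a ∧ w < c := by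
  have shift : ∀ x y : ℤ, ![x, y, 0] ∈ Λ → ![0, x, y] ∈ Λ := by
    intro x y hxy
    refine hs _ _ hxy ?_
    simp [toPoly, Fin.sum_univ_succ]
    ring
  obtain ⟨a₀, a₁, a, p0, p1, p2, hidx, t, u, v, m0, d0, m1, d1, m2, d2⟩ := exists_triangular Λ h
  -- shifting the first two rows gives the divisibilities `a₁ ∣ a₀`, `a₂ ∣ a₁` and `a₁ ∣ t`
  obtain ⟨k, rfl⟩ : a₁ ∣ a₀ := by
    have := d1 _ _ (shift _ _ m0)
    exact_mod_cast this
  obtain ⟨c, rfl⟩ : a ∣ a₁ := by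
    have := d2 _ _ _ (shift _ _ m1)
    exact_mod_cast this
  have hc : 0 < c := Nat.pos_of_mul_pos_left p1
  have hk : 0 < k := Nat.pos_of_mul_pos_left p0
  have hkz : (0 : ℤ) < k := by exact_mod_cast hk
  have hcz : (0 : ℤ) < c := by exact_mod_cast hc
  have haz : (0 : ℤ) < a := by exact_mod_cast p2
  push_cast at m0 d0 m1 d1
  obtain ⟨s, rfl⟩ : (a * c : ℤ) ∣ t := by
    have h1 : ![-(k * t), 0, 0] ∈ Λ := by
      have := Λ.sub_mem (shift _ _ m0) (Λ.zsmul_mem m1 k)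
      convert this using 1
      ext i
      fin_cases i
      · simp
      · simp [mul_comm]
      · simp
    obtain ⟨r, hr⟩ := d0 _ h1
    refine ⟨-r, mul_left_cancel₀ hkz.ne' ?_⟩
    linear_combination -hr
  -- reduction of `s` modulo `k`
  have rowOne' : ![(a * c * (s % k) : ℤ), a * c, 0] ∈ Λ := by
    have := Λ.sub_mem m1 (Λ.zsmul_mem m0 (s / k))
    convert this using 1
    ext i
    fin_cases i
    · simp [Int.emod_def]
      ring
    · simp
    · simp
  obtain ⟨s', hs'⟩ := Int.eq_ofNat_of_zero_le (Int.emod_nonneg s hkz.ne')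
  have hs'k : s' < k := by
    have := Int.emod_lt_of_pos s hkz
    omega
  rw [hs'] at rowOne'
  -- reduction of `v` modulo `a₁`
  have rowTwo' : ∃ u', ![u', v % (a * c), (a : ℤ)] ∈ Λ := by
    have := Λ.sub_mem m2 (Λ.zsmul_mem rowOne' (v / (a * c)))
    refine ⟨u - v / (a * c) * (a * c * s'), ?_⟩
    convert this using 1
    ext i
    fin_cases i
    · simp
    · simp [Int.emod_def]
      ring
    · simp
  obtain ⟨u', rowTwo'⟩ := rowTwo'
  have hac : (0 : ℤ) < a * c := by positivity
  have hack : (0 : ℤ) < a * c * k := by positivity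
  obtain ⟨v', hv'⟩ := Int.eq_ofNat_of_zero_le (Int.emod_nonneg v hac.ne')
  have hv'c : v' < c * a := by
    have := Int.emod_lt_of_pos v hac
    rw [hv'] at this
    rw [mul_comm c a]
    exact_mod_cast this
  rw [hv'] at rowTwo'
  -- reduction of `u` modulo `a₀`
  have rowTwo'' : ![u' % (a * c * k), (v' : ℤ), (a : ℤ)] ∈ Λ := by
    have := Λ.sub_mem rowTwo' (Λ.zsmul_mem m0 (u' / (a * c * k)))
    convert this using 1
    ext i
    fin_cases i
    · simp [Int.emod_def]
      ring
    · simp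
    · simp
  have hu0 := Int.emod_nonneg u' hack.ne'
  have hu1 := Int.emod_lt_of_pos u' hack
  set U := u' % (a * c * k) with hU
  clear_value U
  have n1 : ![-(c * U), (a * c * s' - c * v' : ℤ), 0] ∈ Λ := by
    have := Λ.sub_mem (shift _ _ rowOne') (Λ.zsmul_mem rowTwo'' c)
    convert this using 1
    ext i
    fin_cases i
    · simp
    · simp
    · simp [mul_comm]
  obtain ⟨c₁, hc₁⟩ := d1 _ _ n1
  have n0 : ![-(c * U) - c₁ * (a * c * s'), 0, 0] ∈ Λ := by
    have := Λ.sub_mem n1 (Λ.zsmul_mem rowOne' c₁)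
    convert this using 1
    ext i
    fin_cases i
    · simp
    · simp [hc₁, mul_comm]
    · simp
  obtain ⟨c₀, hc₀⟩ := d0 _ n0
  have hw0 : 0 ≤ c * U / (k * c * a : ℤ) := by positivity
  obtain ⟨w, hw⟩ := Int.eq_ofNat_of_zero_le hw0
  have hac' : (a * c : ℤ) = c * a := mul_comm _ _
  have hack' : (a * c * k : ℤ) = k * c * a := by ring
  have hwc : w < c := by
    have : c * U / (k * c * a : ℤ) < c := by
      rw [Int.ediv_lt_iff_lt_mul (by positivity)]
      rw [← hack']
      exact mul_lt_mul_of_pos_left hu1 hcz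
    rw [hw] at this
    exact_mod_cast this
  rw [hac'] at rowOne' d1 hc₁ hc₀ m0 d0
  rw [mul_comm (c * a : ℤ) k, ← mul_assoc] at m0 d0
  refine ⟨k, c, a, s', v', w, ⟨hk, hc, p2, U, -c₀, c₁, m0, d0, rowOne', d1, rowTwo'', d2, hc₁, ?_,
    hw.symm⟩, ?_, hs'k, hv'c, hwc⟩
  · linear_combination -hc₀
  · rw [hidx]
    ring

/-! ### Upper bound for shift-closed lattices -/

/-- In rank three the parameters `(k, c, a)` range over `k ≤ N`, `c ≤ N^(1/2)`, `a ≤ N^(1/3)`, and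
each triple admits at most `k · c a · c ≤ N` triples `(s, v, w)`. -/
lemma count_rank_three (N : ℕ) :
    {Λ : AddSubgroup (Fin 3 → ℤ) | (Λ.index ≠ 0 ∧ Λ.index ≤ N) ∧ ShiftClosed 3 Λ}.ncard ≤
      N * N.sqrt * ⌊(N : ℝ) ^ (1 / 3 : ℝ)⌋₊ * N := by
  set A := ⌊(N : ℝ) ^ (1 / 3 : ℝ)⌋₊ with hA
  let F : Finset (Σ _ : ℕ × ℕ × ℕ, ℕ × ℕ × ℕ) :=
    ((Finset.Icc 1 N ×ˢ Finset.Icc 1 N.sqrt ×ˢ Finset.Icc 1 A).filter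
      (fun p => p.1 * p.2.1 ^ 2 * p.2.2 ^ 3 ≤ N)).sigma
      (fun p => Finset.range p.1 ×ˢ Finset.range (p.2.1 * p.2.2) ×ˢ Finset.range p.2.1)
  have hF : F.card ≤ N * N.sqrt * A * N := by
    rw [Finset.card_sigma]
    refine (Finset.sum_le_card_nsmul _ _ N ?_).trans ?_
    · rintro ⟨k, c, a⟩ hp
      simp only [Finset.mem_filter, Finset.mem_product, Finset.mem_Icc] at hp
      obtain ⟨⟨⟨hk, -⟩, ⟨hc, -⟩, ha, -⟩, hle⟩ := hp
      simp only [Finset.card_product, Finset.card_range]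
      calc k * (c * a * c) = k * c ^ 2 * a := by ring
        _ ≤ k * c ^ 2 * a ^ 3 := Nat.mul_le_mul_left _ (Nat.le_self_pow (by norm_num) a)
        _ ≤ N := hle
    · rw [smul_eq_mul]
      refine Nat.mul_le_mul_right _ ((Finset.card_filter_le _ _).trans ?_)
      simp [mul_assoc]
  refine le_trans ?_ hF
  rw [← Set.ncard_coe_finset]
  refine (finite_ncard_le_of_code (fun Λ (p : Σ _ : ℕ × ℕ × ℕ, ℕ × ℕ × ℕ) =>
    HermiteCode Λ p.1.1 p.1.2.1 p.1.2.2 p.2.1 p.2.2.1 p.2.2.2) (Finset.finite_toSet F) ?_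
    (fun Λ Λ' p h h' => le_antisymm (HermiteCode.le h h') (HermiteCode.le h' h))).2
  rintro Λ ⟨⟨h0, hN⟩, hs⟩
  obtain ⟨k, c, a, s, v, w, hcode, hidx, hsk, hv, hw⟩ := exists_hermiteCode h0 hs
  refine ⟨⟨(k, c, a), (s, v, w)⟩, ?_, hcode⟩
  obtain ⟨hk, hc, ha, -⟩ := hcode
  rw [hidx] at hN
  have hc2 : 0 < c ^ 2 := by positivity
  have ha3 : 0 < a ^ 3 := by positivity
  have hkN : k ≤ N := by
    refine le_trans ?_ hN
    rw [mul_assoc]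
    exact Nat.le_mul_of_pos_right _ (by positivity)
  have hcN : c ≤ N.sqrt := by
    rw [Nat.le_sqrt']
    refine le_trans ?_ hN
    calc c ^ 2 ≤ c ^ 2 * (k * a ^ 3) := Nat.le_mul_of_pos_right _ (by positivity)
      _ = k * c ^ 2 * a ^ 3 := by ring
  have haN : a ≤ A := by
    have h3 : a ^ 3 ≤ N := by
      refine le_trans ?_ hN
      exact Nat.le_mul_of_pos_left _ (by positivity)
    refine Nat.le_floor ?_
    rw [show (a : ℝ) = ((a : ℝ) ^ (3 : ℕ)) ^ (1 / 3 : ℝ) by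
      rw [← Real.rpow_natCast, ← Real.rpow_mul (by positivity)]; norm_num]
    exact Real.rpow_le_rpow (by positivity) (by exact_mod_cast h3) (by norm_num)
  simp only [F, Finset.coe_sigma, Set.mem_sigma_iff, Finset.mem_coe, Finset.mem_filter,
    Finset.mem_product, Finset.mem_Icc, Finset.mem_range]
  exact ⟨⟨⟨⟨hk, hkN⟩, ⟨hc, hcN⟩, ha, haN⟩, hN⟩, hsk, hv, hw⟩

lemma count_shiftClosed (m N : ℕ) :
    {Λ : AddSubgroup (Fin (m + 3) → ℤ) |
        (Λ.index ≠ 0 ∧ Λ.index ≤ N) ∧ ShiftClosed (m + 3) Λ}.ncard ≤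
      N * N.sqrt * ⌊(N : ℝ) ^ (1 / 3 : ℝ)⌋₊ * N * N ^ m := by
  induction m with
  | zero => simpa using count_rank_three N
  | succ m ih =>
    rw [pow_succ, ← mul_assoc]
    refine le_trans ?_ (Nat.mul_le_mul_right N ih)
    refine (extension_count (d := m + 3) (N := N)
      ((finite_index_le (m + 3) N).subset fun Λ h => h.1) (fun Λ h => h.1) ?_).2
    rintro Λ ⟨⟨h0, hN⟩, hs⟩
    obtain ⟨a, ha, hidx, -⟩ := exists_layer Λ h0
    rw [hidx] at h0 hN
    exact ⟨⟨left_ne_zero_of_mul h0, (Nat.le_mul_of_pos_right _ ha).trans hN⟩, hs.comap⟩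

/-! ### Lower bound for the number of all lattices -/

/-- The homomorphism `v ↦ v₀ + ∑ cᵢ vᵢ₊₁` to `ℤ/n`. Different `c` give different kernels, each of
index `n`. -/
def modForm (m n : ℕ) (c : Fin m → ZMod n) : (Fin (m + 1) → ℤ) →+ ZMod n where
  toFun v := (v 0 : ZMod n) + ∑ i : Fin m, c i * (v i.succ : ZMod n)
  map_zero' := by simp
  map_add' v w := by
    simp only [Pi.add_apply, Int.cast_add, mul_add, Finset.sum_add_distrib]
    ring

lemma modForm_surjective (m n : ℕ) (c : Fin m → ZMod n) :
    Function.Surjective (modForm m n c) := by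
  intro x
  obtain ⟨y, rfl⟩ := ZMod.intCast_surjective x
  exact ⟨Fin.cons y 0, by simp [modForm]⟩

lemma pow_le_card_index (m n : ℕ) (hn : 1 ≤ n) :
    n ^ m ≤ Nat.card {Λ : AddSubgroup (Fin (m + 1) → ℤ) // Λ.index = n} := by
  have : NeZero n := ⟨by omega⟩
  have hfin : Finite {Λ : AddSubgroup (Fin (m + 1) → ℤ) // Λ.index = n} :=
    ((finite_index_le (m + 1) n).subset fun Λ (h : Λ.index = n) =>
      ⟨by omega, h.le⟩).to_subtype
  have hcard : Nat.card (Fin m → ZMod n) = n ^ m := by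
    simp [Nat.card_eq_fintype_card, ZMod.card]
  rw [← hcard]
  refine Nat.card_le_card_of_injective (fun c => ⟨(modForm m n c).ker, ?_⟩) ?_
  · rw [AddSubgroup.index_ker, AddMonoidHom.range_eq_top.2 (modForm_surjective m n c)]
    simp
  · intro c c' h
    have hker : (modForm m n c).ker = (modForm m n c').ker := congrArg Subtype.val h
    ext1 i
    obtain ⟨y, hy⟩ := ZMod.intCast_surjective (c i)
    have key : ∀ b : Fin m → ZMod n,
        modForm m n b (Fin.cons (-y) (Pi.single i 1)) = b i - c i := by
      intro b
      have : ∀ j, b j * ((Pi.single i 1 : Fin m → ℤ) j : ZMod n) = if j = i then b j else 0 := by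
        intro j
        by_cases hj : j = i
        · subst hj; simp
        · simp [hj]
      simp [modForm, this, hy]
      ring
    have h1 : (Fin.cons (-y) (Pi.single i 1) : Fin (m + 1) → ℤ) ∈ (modForm m n c).ker := by
      rw [AddMonoidHom.mem_ker, key, sub_self]
    rw [hker, AddMonoidHom.mem_ker, key] at h1
    exact (sub_eq_zero.1 h1).symm

lemma sum_card_index_ge (m N : ℕ) (hN : 1 ≤ N) :
    ((N : ℝ) / 2) ^ (m + 1) ≤ ∑ n ∈ Finset.Icc 1 N,
      (Nat.card {Λ : AddSubgroup (Fin (m + 1) → ℤ) // Λ.index = n} : ℝ) := by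
  have hsub : Finset.Icc ((N + 1) / 2) N ⊆ Finset.Icc 1 N := by
    apply Finset.Icc_subset_Icc_left
    omega
  refine le_trans ?_ (Finset.sum_le_sum_of_subset_of_nonneg hsub fun _ _ _ => by positivity)
  have hterm : ∀ n ∈ Finset.Icc ((N + 1) / 2) N, ((N : ℝ) / 2) ^ m ≤
      (Nat.card {Λ : AddSubgroup (Fin (m + 1) → ℤ) // Λ.index = n} : ℝ) := by
    intro n hn
    rw [Finset.mem_Icc] at hn
    have h1 := pow_le_card_index m n (by omega)
    have h2 : (N : ℝ) ≤ 2 * n := by exact_mod_cast (by omega : N ≤ 2 * n)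
    calc ((N : ℝ) / 2) ^ m ≤ (n : ℝ) ^ m := by gcongr; linarith
      _ ≤ _ := by exact_mod_cast h1
  have hc : (N : ℝ) / 2 ≤ ((Finset.Icc ((N + 1) / 2) N).card : ℝ) := by
    rw [Nat.card_Icc]
    have : N ≤ 2 * (N + 1 - (N + 1) / 2) := by omega
    have : (N : ℝ) ≤ 2 * ((N + 1 - (N + 1) / 2 : ℕ) : ℝ) := by exact_mod_cast this
    linarith
  calc ((N : ℝ) / 2) ^ (m + 1) = (N : ℝ) / 2 * ((N : ℝ) / 2) ^ m := by ring
    _ ≤ ((Finset.Icc ((N + 1) / 2) N).card : ℝ) * ((N : ℝ) / 2) ^ m := by gcongr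
    _ ≤ _ := by
      rw [← nsmul_eq_mul]
      exact Finset.card_nsmul_le_sum _ _ _ hterm

/-! ### The limit -/

lemma sum_card_ideal_le (d N : ℕ) :
    ∑ n ∈ Finset.Icc 1 N,
      Nat.card {Λ : AddSubgroup (Fin d → ℤ) // Λ.index = n ∧ IsIdealLattice d Λ} ≤
    {Λ : AddSubgroup (Fin d → ℤ) |
        (Λ.index ≠ 0 ∧ Λ.index ≤ N) ∧ ShiftClosed d Λ}.ncard := by
  classical
  set S := {Λ : AddSubgroup (Fin d → ℤ) | (Λ.index ≠ 0 ∧ Λ.index ≤ N) ∧ ShiftClosed d Λ} with hS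
  have hfin : S.Finite := (finite_index_le d N).subset fun Λ h => h.1
  rw [Set.ncard_eq_toFinset_card S hfin, Finset.card_eq_sum_card_fiberwise
    (f := fun Λ => Λ.index) (t := Finset.Icc 1 N)]
  · refine Finset.sum_le_sum fun n hn => ?_
    rw [Finset.mem_Icc] at hn
    rw [← Set.ncard_coe_finset]
    change Set.ncard {Λ : AddSubgroup (Fin d → ℤ) | Λ.index = n ∧ IsIdealLattice d Λ} ≤ _
    refine Set.ncard_le_ncard ?_ (Finset.finite_toSet _)
    rintro Λ ⟨h1, h2⟩
    simp only [Finset.coe_filter, Set.Finite.mem_toFinset, Set.mem_ofPred_eq, hS]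
    exact ⟨⟨⟨by omega, by omega⟩, h2.shiftClosed⟩, h1⟩
  · intro Λ hΛ
    have : Λ ∈ S := by simpa using hΛ
    simp only [Finset.coe_Icc, Set.mem_Icc]
    exact ⟨Nat.one_le_iff_ne_zero.2 this.1.1, this.1.2⟩

/-- Corollary 4.2: for `d ≥ 3`, the proportion of ideal lattices of index at most `N` among
all finite-index subgroups of `ℤ^d` of index at most `N` tends to zero. -/
theorem ideal_lattice_density_zero (d : ℕ) (hd : 3 ≤ d) :
    Tendsto (fun N : ℕ =>
        (∑ n ∈ Finset.Icc 1 N,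
          (Nat.card {Λ : AddSubgroup (Fin d → ℤ) //
            Λ.index = n ∧ IsIdealLattice d Λ} : ℝ)) /
        (∑ n ∈ Finset.Icc 1 N,
          (Nat.card {Λ : AddSubgroup (Fin d → ℤ) // Λ.index = n} : ℝ)))
      atTop (𝓝 0) := by
  obtain ⟨m, rfl⟩ : ∃ m, d = m + 3 := ⟨d - 3, by omega⟩
  have hlim : Tendsto (fun N : ℕ => (2 : ℝ) ^ (m + 3) * (N : ℝ) ^ (-(1 / 6) : ℝ)) atTop (𝓝 0) := by
    have := ((tendsto_rpow_neg_atTop (y := 1 / 6) (by norm_num)).comp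
      tendsto_natCast_atTop_atTop).const_mul ((2 : ℝ) ^ (m + 3))
    simpa using this
  refine tendsto_of_tendsto_of_tendsto_of_le_of_le' tendsto_const_nhds hlim ?_ ?_
  · exact Eventually.of_forall fun N => by positivity
  · filter_upwards [eventually_ge_atTop 1] with N hN
    have hNpos : (0 : ℝ) < N := by exact_mod_cast hN
    have hden := sum_card_index_ge (m + 2) N hN
    have hnum : ∑ n ∈ Finset.Icc 1 N, (Nat.card {Λ : AddSubgroup (Fin (m + 3) → ℤ) //
        Λ.index = n ∧ IsIdealLattice (m + 3) Λ} : ℝ) ≤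
        N * N.sqrt * ⌊(N : ℝ) ^ (1 / 3 : ℝ)⌋₊ * N * N ^ m := by
      exact_mod_cast (sum_card_ideal_le (m + 3) N).trans (count_shiftClosed m N)
    have hsqrt : (N.sqrt : ℝ) ≤ (N : ℝ) ^ (1 / 2 : ℝ) := by
      rw [← Real.sqrt_eq_rpow]
      exact Real.nat_sqrt_le_real_sqrt
    have hfloor : (⌊(N : ℝ) ^ (1 / 3 : ℝ)⌋₊ : ℝ) ≤ (N : ℝ) ^ (1 / 3 : ℝ) :=
      Nat.floor_le (by positivity)
    have hpow : (N : ℝ) ^ (1 / 2 : ℝ) * (N : ℝ) ^ (1 / 3 : ℝ) =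
        N * (N : ℝ) ^ (-(1 / 6) : ℝ) := by
      rw [← Real.rpow_add hNpos, ← Real.rpow_one_add' hNpos.le (by norm_num)]
      norm_num
    rw [div_le_iff₀ (lt_of_lt_of_le (by positivity) hden)]
    calc _ ≤ _ := hnum
      _ ≤ (N : ℝ) * (N : ℝ) ^ (1 / 2 : ℝ) * (N : ℝ) ^ (1 / 3 : ℝ) * N * N ^ m := by gcongr
      _ = (2 : ℝ) ^ (m + 3) * (N : ℝ) ^ (-(1 / 6) : ℝ) * ((N : ℝ) / 2) ^ (m + 2 + 1) := by
        rw [mul_assoc (N : ℝ), hpow, div_pow]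
        field_simp
        ring
      _ ≤ _ := by gcongr
end

section
/- For every positive integer n, the number of ideals I of the ring ℤ[X]/(X²) with |(ℤ[X]/(X²))/I| = n equals Σ_{d ≥ 1, d² ∣ n} d, the sum of all positive integers d whose square divides n. -/
/-!
Under `X ↦ ε` the ring `ℤ[X]/(X²)` is isomorphic to the dual numbers `ℤ[ε]`
(`quotientEquivDualNumber`), so ideals may be counted there. Let `J` be an ideal of finite index
in `ℤ[ε]`. Its image under `ε ↦ 0` is `aℤ`, and `J ∩ ℤε = eℤε`, with `a, e > 0`. Multiplying an
element `a + cε` of `J` by `ε` gives `aε ∈ J`, so `e ∣ a`, and `J` is the lattice spanned by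
`a + bε` and `eε` for a unique `0 ≤ b < e` (`exists_eq_latticeIdeal`). Conversely each such lattice
with `e ∣ a` is an ideal, of index `a * e` (`card_quotient_latticeIdeal`). An ideal of index `n`
is thus a choice of `e` with `e² ∣ n`, which forces `a = n / e`, together with one of the `e`
residues `b`, for a total of `∑ e`.
-/

open Polynomial

/-- The evaluation `ℤ[X] → ℤ[ε]`, `X ↦ ε`. -/
noncomputable def evalEps : ℤ[X] →ₐ[ℤ] DualNumber ℤ := aeval DualNumber.eps

lemma evalEps_C_add (u v : ℤ) (q : ℤ[X]) :
    evalEps (C u + C v * X + X ^ 2 * q) = TrivSqZeroExt.inl u + TrivSqZeroExt.inr v := by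
  have h : (DualNumber.eps : DualNumber ℤ) ^ 2 = 0 := by
    rw [pow_two]; exact DualNumber.eps_mul_eps
  simp only [evalEps, map_add, map_mul, map_pow, aeval_X, h, zero_mul, add_zero, aeval_C]
  ext <;> simp

lemma ker_evalEps : RingHom.ker evalEps.toRingHom = Ideal.span {(X ^ 2 : ℤ[X])} := by
  ext p
  -- Split `p` into its part of degree at most one and a multiple of `X ^ 2`.
  obtain ⟨q, hq⟩ : (X ^ 2 : ℤ[X]) ∣ p - (C (p.coeff 0) + C (p.coeff 1) * X) := by
    rw [X_pow_dvd_iff]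
    intro d hd
    interval_cases d
    · simp
    · rw [coeff_sub, coeff_add, coeff_C_mul, coeff_X_one, coeff_C_of_ne_zero one_ne_zero]
      ring
  have hp : p = C (p.coeff 0) + C (p.coeff 1) * X + X ^ 2 * q := by rw [← hq]; ring
  have hv : evalEps p = TrivSqZeroExt.inl (p.coeff 0) + TrivSqZeroExt.inr (p.coeff 1) := by
    conv_lhs => rw [hp]
    exact evalEps_C_add _ _ _
  rw [RingHom.mem_ker, Ideal.mem_span_singleton, X_pow_dvd_iff]
  change evalEps p = 0 ↔ _
  rw [hv]
  constructor
  · intro h d hd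
    have h0 := congrArg TrivSqZeroExt.fst h
    have h1 := congrArg TrivSqZeroExt.snd h
    simp at h0 h1
    interval_cases d <;> assumption
  · intro h
    rw [h 0 (by norm_num), h 1 (by norm_num)]
    simp

lemma evalEps_surjective : Function.Surjective evalEps.toRingHom := by
  intro z
  refine ⟨C z.fst + C z.snd * X + X ^ 2 * 0, ?_⟩
  change evalEps _ = _
  rw [evalEps_C_add, TrivSqZeroExt.inl_fst_add_inr_snd_eq]

/-- The isomorphism `ℤ[X]/(X²) ≃ ℤ[ε]` induced by `X ↦ ε`. -/
noncomputable def quotientEquivDualNumber :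
    (ℤ[X] ⧸ Ideal.span {(X ^ 2 : ℤ[X])}) ≃+* DualNumber ℤ :=
  (Ideal.quotEquivOfEq ker_evalEps.symm).trans
    (RingHom.quotientKerEquivOfSurjective evalEps_surjective)

/-- The lattice in `ℤ[ε]` spanned by `a + bε` and `eε`; it is an ideal because `e ∣ a`. -/
def latticeIdeal (a e b : ℤ) (h : e ∣ a) : Ideal (DualNumber ℤ) where
  carrier := {z | ∃ k : ℤ, z.fst = a * k ∧ e ∣ z.snd - b * k}
  zero_mem' := ⟨0, by simp⟩
  add_mem' := by
    rintro z w ⟨k, hk, hk'⟩ ⟨l, hl, hl'⟩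
    refine ⟨k + l, by simp [hk, hl]; ring, ?_⟩
    have : (z + w).snd - b * (k + l) = (z.snd - b * k) + (w.snd - b * l) := by
      rw [TrivSqZeroExt.snd_add]; ring
    rw [this]
    exact dvd_add hk' hl'
  smul_mem' := by
    rintro c z ⟨k, hk, hk'⟩
    refine ⟨c.fst * k, by simp [hk]; ring, ?_⟩
    have : (c • z).snd - b * (c.fst * k) = c.fst * (z.snd - b * k) + a * (k * c.snd) := by
      simp [hk]; ring
    rw [this]
    exact dvd_add (hk'.mul_left c.fst) (h.mul_right (k * c.snd))

lemma mem_latticeIdeal {a e b : ℤ} {h : e ∣ a} {z : DualNumber ℤ} :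
    z ∈ latticeIdeal a e b h ↔ ∃ k : ℤ, z.fst = a * k ∧ e ∣ z.snd - b * k := Iff.rfl

lemma inr_mem_latticeIdeal {a e b : ℤ} {h : e ∣ a} (ha : a ≠ 0) {y : ℤ} :
    (TrivSqZeroExt.inr y : DualNumber ℤ) ∈ latticeIdeal a e b h ↔ e ∣ y := by
  rw [mem_latticeIdeal]
  constructor
  · rintro ⟨k, hk, hk'⟩
    have : k = 0 := by simpa [ha] using hk
    simpa [this] using hk'
  · intro hy
    exact ⟨0, by simp, by simpa using hy⟩

lemma eq_of_dvd_sub_of_fin {m : ℕ} {i j : Fin m} (h : (m : ℤ) ∣ (i : ℤ) - (j : ℤ)) : i = j := by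
  have := Int.eq_zero_of_abs_lt_dvd h (by
    have := i.2; have := j.2; rw [abs_lt]; omega)
  ext; omega

/-- The elements `i + jε` with `0 ≤ i < a` and `0 ≤ j < e` represent each class exactly once. -/
lemma card_quotient_latticeIdeal (a e : ℕ) (b : ℤ) (h : (e : ℤ) ∣ a) (ha : 0 < a) (he : 0 < e) :
    Nat.card (DualNumber ℤ ⧸ latticeIdeal a e b h) = a * e := by
  have haz : (a : ℤ) ≠ 0 := by exact_mod_cast ha.ne'
  have hez : (e : ℤ) ≠ 0 := by exact_mod_cast he.ne'
  let f : Fin a × Fin e → DualNumber ℤ ⧸ latticeIdeal a e b h := fun p =>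
    Ideal.Quotient.mk _ (TrivSqZeroExt.inl (p.1 : ℤ) + TrivSqZeroExt.inr (p.2 : ℤ))
  have hf : Function.Bijective f := by
    constructor
    · rintro ⟨i, j⟩ ⟨i', j'⟩ hij
      obtain ⟨k, hk, hk'⟩ := mem_latticeIdeal.1 (Ideal.Quotient.eq.1 hij)
      simp at hk hk'
      obtain rfl : i = i' := eq_of_dvd_sub_of_fin ⟨k, hk⟩
      have hk0 : k = 0 := by simpa [ha.ne'] using hk
      rw [hk0, mul_zero, sub_zero] at hk'
      rw [eq_of_dvd_sub_of_fin hk']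
    · intro q
      obtain ⟨z, rfl⟩ := Ideal.Quotient.mk_surjective q
      set y : ℤ := z.snd - b * (z.fst / a) with hy
      have h1 := Int.emod_nonneg z.fst haz
      have h2 := Int.emod_lt_of_pos z.fst (by exact_mod_cast ha : (0 : ℤ) < a)
      have h3 := Int.emod_nonneg y hez
      have h4 := Int.emod_lt_of_pos y (by exact_mod_cast he : (0 : ℤ) < e)
      refine ⟨(⟨(z.fst % a).toNat, by omega⟩, ⟨(y % e).toNat, by omega⟩), ?_⟩
      refine Eq.symm (Ideal.Quotient.eq.2 (mem_latticeIdeal.2 ⟨z.fst / a, ?_, y / e, ?_⟩))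
      · simp [Int.toNat_of_nonneg h1]
        have := Int.emod_add_mul_ediv z.fst a
        linarith
      · simp [Int.toNat_of_nonneg h3]
        have := Int.emod_add_mul_ediv y e
        linarith
  rw [← Nat.card_eq_of_bijective f hf]
  simp

lemma exists_nat_span (I : Ideal ℤ) : ∃ a : ℕ, ∀ x, x ∈ I ↔ (a : ℤ) ∣ x := by
  obtain ⟨g, hg⟩ := (IsPrincipalIdealRing.principal I).principal
  refine ⟨g.natAbs, fun x => ?_⟩
  rw [hg, Int.natAbs_dvd]
  exact Ideal.mem_span_singleton

lemma exists_eq_latticeIdeal (J : Ideal (DualNumber ℤ)) (hJ : 0 < Nat.card (DualNumber ℤ ⧸ J)) :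
    ∃ (a e b : ℕ) (h : (e : ℤ) ∣ a), 0 < a ∧ b < e ∧ J = latticeIdeal a e b h := by
  set n := Nat.card (DualNumber ℤ ⧸ J) with hn
  have hnJ : (n : DualNumber ℤ) ∈ J := by
    rw [← Ideal.Quotient.eq_zero_iff_mem, map_natCast, ← nsmul_one, hn]
    exact card_nsmul_eq_zero'
  have hsurj : Function.Surjective (TrivSqZeroExt.fstHom ℤ ℤ ℤ).toRingHom :=
    fun x => ⟨TrivSqZeroExt.inl x, by simp⟩
  obtain ⟨a, ha⟩ := exists_nat_span (J.map (TrivSqZeroExt.fstHom ℤ ℤ ℤ).toRingHom)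
  have ha' : ∀ x : ℤ, (∃ z ∈ J, z.fst = x) ↔ (a : ℤ) ∣ x := fun x => by
    rw [← ha, Ideal.mem_map_iff_of_surjective _ hsurj]; rfl
  -- The coefficients `y` with `yε ∈ J`.
  let E : Ideal ℤ :=
    { carrier := {y | (TrivSqZeroExt.inr y : DualNumber ℤ) ∈ J}
      zero_mem' := by simp
      add_mem' := fun {x y} hx hy => by
        simpa only [Set.mem_ofPred_eq, TrivSqZeroExt.inr_add] using J.add_mem hx hy
      smul_mem' := fun c y hy => by
        have := J.mul_mem_left (TrivSqZeroExt.inl c) hy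
        simpa only [Set.mem_ofPred_eq, TrivSqZeroExt.inl_mul_inr] using this }
  obtain ⟨e, he⟩ := exists_nat_span E
  have he' : ∀ y : ℤ, (TrivSqZeroExt.inr y : DualNumber ℤ) ∈ J ↔ (e : ℤ) ∣ y := he
  have hmul : ∀ z ∈ J, (e : ℤ) ∣ z.fst := fun z hz => by
    rw [← he']
    have := J.mul_mem_left (TrivSqZeroExt.inr 1) hz
    convert this using 1
    ext <;> simp
  have hnfst : (n : DualNumber ℤ).fst = n := by simp
  have ha0 : 0 < a := by
    have h : (a : ℤ) ∣ n := (ha' n).1 ⟨n, hnJ, hnfst⟩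
    exact Nat.pos_of_dvd_of_pos (Int.natCast_dvd_natCast.1 h) hJ
  have he0 : 0 < e := by
    have h : (e : ℤ) ∣ n := hnfst ▸ hmul _ hnJ
    exact Nat.pos_of_dvd_of_pos (Int.natCast_dvd_natCast.1 h) hJ
  obtain ⟨w, hw, hwa⟩ := (ha' a).2 dvd_rfl
  have hez : (e : ℤ) ≠ 0 := by exact_mod_cast he0.ne'
  have h3 := Int.emod_nonneg w.snd hez
  have h4 := Int.emod_lt_of_pos w.snd (by exact_mod_cast he0 : (0 : ℤ) < e)
  refine ⟨a, e, (w.snd % e).toNat, hwa ▸ hmul w hw, ha0, by omega, ?_⟩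
  -- If `z.fst = a * k`, then `z - k • w` lies in `ℤε`, so membership in `J` is read off from `e`.
  have key : ∀ (z : DualNumber ℤ) (k : ℤ), z.fst = a * k →
      (z ∈ J ↔ (e : ℤ) ∣ z.snd - w.snd * k) := fun z k hk => by
    rw [← he', ← J.sub_mem_iff_left (J.mul_mem_left (TrivSqZeroExt.inl k) hw)]
    have : z - TrivSqZeroExt.inl k * w = TrivSqZeroExt.inr (z.snd - w.snd * k) := by
      ext
      · simp [hk, hwa]; ring
      · simp; ring
    rw [this]
  have hcong : ∀ y k : ℤ, (e : ℤ) ∣ y - (w.snd % e) * k ↔ (e : ℤ) ∣ y - w.snd * k := fun y k => by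
    have : y - (w.snd % e) * k = (y - w.snd * k) + e * (w.snd / e * k) := by
      have := Int.emod_add_mul_ediv w.snd e
      linear_combination (-k) * this
    rw [this, dvd_add_left (dvd_mul_right _ _)]
  ext z
  rw [mem_latticeIdeal, Int.toNat_of_nonneg h3]
  constructor
  · intro hz
    obtain ⟨k, hk⟩ := (ha' z.fst).1 ⟨z, hz, rfl⟩
    exact ⟨k, hk, (hcong _ _).2 ((key z k hk).1 hz)⟩
  · rintro ⟨k, hk, hk'⟩
    exact (key z k hk).2 ((hcong _ _).1 hk')

lemma card_ideals_dualNumber (n : ℕ) (hn : 0 < n) :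
    Nat.card {J : Ideal (DualNumber ℤ) // Nat.card (DualNumber ℤ ⧸ J) = n} =
      ∑ d ∈ (Finset.Icc 1 n).filter (fun d => d ^ 2 ∣ n), d := by
  set S := (Finset.Icc 1 n).filter (fun d => d ^ 2 ∣ n) with hS
  have hpos : ∀ e : S, 0 < (e : ℕ) := fun e =>
    (Finset.mem_Icc.1 (Finset.mem_filter.1 e.2).1).1
  have hdvd : ∀ e : S, (e : ℕ) ^ 2 ∣ n := fun e => (Finset.mem_filter.1 e.2).2
  have hdn : ∀ e : S, (e : ℕ) ∣ n := fun e => (dvd_pow_self _ two_ne_zero).trans (hdvd e)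
  have hdvd' : ∀ e : S, ((e : ℕ) : ℤ) ∣ ((n / e : ℕ) : ℤ) := fun e => by
    rw [Int.natCast_dvd_natCast]
    exact Nat.dvd_div_of_mul_dvd (by rw [← pow_two]; exact hdvd e)
  have hquot : ∀ e : S, 0 < n / (e : ℕ) := fun e =>
    Nat.div_pos (Nat.le_of_dvd hn (hdn e)) (hpos e)
  let F : (Σ e : S, Fin e) →
      {J : Ideal (DualNumber ℤ) // Nat.card (DualNumber ℤ ⧸ J) = n} := fun p =>
    ⟨latticeIdeal (n / p.1 : ℕ) (p.1 : ℕ) (p.2 : ℕ) (hdvd' p.1), by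
      rw [card_quotient_latticeIdeal _ _ _ _ (hquot p.1) (hpos p.1)]
      exact Nat.div_mul_cancel (hdn p.1)⟩
  have hF : Function.Bijective F := by
    constructor
    · rintro ⟨e, b⟩ ⟨e', b'⟩ h
      have h' : latticeIdeal (n / e : ℕ) (e : ℕ) (b : ℕ) (hdvd' e) =
        latticeIdeal (n / e' : ℕ) (e' : ℕ) (b' : ℕ) (hdvd' e') := congrArg Subtype.val h
      have hz : ∀ e : S, ((n / (e : ℕ) : ℕ) : ℤ) ≠ 0 := fun e => by
        exact_mod_cast Nat.pos_iff_ne_zero.1 (hquot e)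
      -- Both ideals meet `ℤε` in the same subgroup, which recovers `e`.
      have hy : ∀ y : ℤ, ((e : ℕ) : ℤ) ∣ y ↔ ((e' : ℕ) : ℤ) ∣ y := fun y => by
        rw [← inr_mem_latticeIdeal (b := (b : ℕ)) (h := hdvd' e) (hz e), h',
          inr_mem_latticeIdeal (hz e')]
      obtain rfl : e = e' := Subtype.ext (Nat.dvd_antisymm
        (Int.natCast_dvd_natCast.1 ((hy _).2 dvd_rfl))
        (Int.natCast_dvd_natCast.1 ((hy _).1 dvd_rfl)))
      have hm : (TrivSqZeroExt.inl ((n / (e : ℕ) : ℕ) : ℤ) + TrivSqZeroExt.inr ((b : ℕ) : ℤ) :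
          DualNumber ℤ) ∈ latticeIdeal (n / e : ℕ) (e : ℕ) (b : ℕ) (hdvd' e) :=
        mem_latticeIdeal.2 ⟨1, by simp, by simp⟩
      rw [h'] at hm
      obtain ⟨k, hk, hk'⟩ := mem_latticeIdeal.1 hm
      rw [TrivSqZeroExt.fst_add, TrivSqZeroExt.fst_inl, TrivSqZeroExt.fst_inr, add_zero] at hk
      have hk1 : k = 1 := mul_left_cancel₀ (hz e) (by rw [← hk, mul_one])
      rw [TrivSqZeroExt.snd_add, TrivSqZeroExt.snd_inl, TrivSqZeroExt.snd_inr, zero_add, hk1,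
        mul_one] at hk'
      rw [eq_of_dvd_sub_of_fin hk']
    · rintro ⟨J, hJ⟩
      obtain ⟨a, e, b, h, ha, hb, rfl⟩ := exists_eq_latticeIdeal J (hJ ▸ hn)
      have he : 0 < e := by omega
      rw [card_quotient_latticeIdeal _ _ _ _ ha he] at hJ
      have hea : e ∣ a := Int.natCast_dvd_natCast.1 h
      have hsq : e ^ 2 ∣ n := by
        rw [← hJ, pow_two]; exact Nat.mul_dvd_mul_right hea e
      have hle : e ≤ n := by rw [← hJ]; exact Nat.le_mul_of_pos_left e ha
      have hne : n / e = a := by rw [← hJ]; exact Nat.mul_div_cancel a he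
      refine ⟨⟨⟨e, by simp [hS]; exact ⟨⟨he, hle⟩, hsq⟩⟩, ⟨b, hb⟩⟩, ?_⟩
      apply Subtype.ext
      simp only [F, hne]
  rw [← Nat.card_eq_of_bijective F hF, Nat.card_sigma]
  simp only [Nat.card_eq_fintype_card, Fintype.card_fin]
  exact Finset.sum_coe_sort S (fun d => d)

/-- Coefficient form of `ζ(ℤ[X]/(X²), s) = ζ(s)·ζ(2s-1)`: the number of ideals of the ring
of dual numbers `ℤ[X]/(X²)` of index `n` equals the sum of all positive integers `d` with
`d² ∣ n`. -/
theorem card_ideals_dual_numbers (n : ℕ) (hn : 0 < n) :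
    Nat.card {I : Ideal (Polynomial ℤ ⧸ Ideal.span {(X ^ 2 : Polynomial ℤ)}) //
        Nat.card ((Polynomial ℤ ⧸ Ideal.span {(X ^ 2 : Polynomial ℤ)}) ⧸ I) = n} =
      ∑ d ∈ (Finset.Icc 1 n).filter (fun d => d ^ 2 ∣ n), d := by
  rw [← card_ideals_dualNumber n hn]
  refine Nat.card_congr ((quotientEquivDualNumber.idealComapOrderIso.symm.toEquiv).subtypeEquiv
    fun I => ?_)
  have : Nat.card ((ℤ[X] ⧸ Ideal.span {(X ^ 2 : ℤ[X])}) ⧸ I) =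
      Nat.card (DualNumber ℤ ⧸ quotientEquivDualNumber.idealComapOrderIso.symm I) :=
    Nat.card_congr (Ideal.quotientEquiv I _ quotientEquivDualNumber (by
      ext x
      simp [RingEquiv.idealComapOrderIso, Ideal.map_comap_of_equiv])).toEquiv
  rw [this]
  rfl
end
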